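/- arXiv:math/0311271 — 2 statements merged into one kernel-verified Lean document; each statement's English description precedes it below -/
import Mathlib

section
/- For all integers k ≥ 0 and n with 2k+3 ≤ n ≤ 3k+4, the reduced simplicial homology group H̃_k(Δ_n; ℤ) is nonzero. -/
/-- The chain `L` of subsets of `{1,…,n}` (encoded as `Finset (Fin n)`) with the
sentinels `S₀ = ∅` and `S_{j+1} = univ` adjoined. -/
def withSent (n : ℕ) (L : List (Finset (Fin n))) : List (Finset (Fin n)) :=
  (∅ :: L) ++ [Finset.univ]

/-- `L` is a face of the h-complex `Δₙ` of the truncated Boolean algebra: a strictly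
increasing chain of proper nonempty subsets such that, with sentinels adjoined,
every consecutive pair of blocks has `max (S_i \ S_{i-1}) > min (S_{i+1} \ S_i)`
(expressed as: some element of the lower difference exceeds some element of the
upper difference, which is equivalent since max ≥ a and min ≤ c). -/
def IsFace (n : ℕ) (L : List (Finset (Fin n))) : Prop :=
  (withSent n L).Chain' (· ⊂ ·) ∧
  ∀ i, ∀ h : i + 2 < (withSent n L).length,
    ∃ a ∈ (withSent n L).get ⟨i + 1, by omega⟩ \ (withSent n L).get ⟨i, by omega⟩,
      ∃ c ∈ (withSent n L).get ⟨i + 2, h⟩ \ (withSent n L).get ⟨i + 1, by omega⟩, c < a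

/-- The faces of `Δₙ` consisting of exactly `k` subsets (dimension `k - 1`;
`k = 0` gives the unique empty face, present for `n ≥ 1`). -/
def HFace (n k : ℕ) : Type := {L : List (Finset (Fin n)) // IsFace n L ∧ L.length = k}

open scoped Classical in
/-- The simplicial boundary of a face with `k+1` members: the alternating sum of
the faces obtained by deleting one member (deleting a member of a face of `Δₙ`
always yields a face, so the `dite` fallback is never used). -/
noncomputable def bdryElem (n k : ℕ) (L : HFace n (k + 1)) : HFace n k →₀ ℤ :=
  ∑ i : Fin (k + 1),
    if h : IsFace n (L.1.eraseIdx i) ∧ (L.1.eraseIdx i).length = k then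
      Finsupp.single (⟨L.1.eraseIdx i, h⟩ : HFace n k) ((-1 : ℤ) ^ (i : ℕ))
    else 0

/-- The boundary map of the augmented (reduced) simplicial chain complex of
`Δₙ` over `ℤ`, from chains on faces with `k+1` members to chains on faces with
`k` members. -/
noncomputable def bdry (n k : ℕ) : (HFace n (k + 1) →₀ ℤ) →ₗ[ℤ] (HFace n k →₀ ℤ) :=
  Finsupp.lsum ℤ fun L => LinearMap.toSpanSingleton ℤ _ (bdryElem n k L)

/-- The reduced simplicial homology `H̃ᵢ(Δₙ; ℤ)`: cycles on `i`-dimensional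
faces (those with `i+1` members) modulo boundaries from `(i+1)`-dimensional
faces. -/
noncomputable def ReducedHomology (n i : ℕ) :=
  LinearMap.ker (bdry n i) ⧸
    Submodule.comap (LinearMap.ker (bdry n i)).subtype (LinearMap.range (bdry n (i + 1)))

/-- Membership predicate of the vertices of the cross-polytope: `b = true` gives the facet. -/
def PP (J : ℕ) (b : Bool) (i x : ℕ) : Prop :=
  (b = true ∧ ((i = 1 ∧ 1 ≤ J ∧ (x + 1 = J ∨ x = J + 1)) ∨
    (2 ≤ i ∧ i ≤ J ∧ J + 1 ≤ x + i ∧ x ≤ J + i) ∨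
    (J < i ∧ (x + J + 3 ≤ 3 * i ∨ x + J + 1 = 3 * i)))) ∨
  (b = false ∧ ((1 ≤ i ∧ i ≤ J ∧ J + 1 ≤ x + i ∧ x + 1 ≤ J + i) ∨
    (J < i ∧ (x + J + 3 ≤ 3 * i ∨ x + J = 3 * i))))

open scoped Classical in
/-- The vertices of the cross-polytope. -/
noncomputable def TT (n J : ℕ) (b : Bool) (i : ℕ) : Finset (Fin n) :=
  Finset.univ.filter fun x => PP J b i x

theorem mem_TT {n J : ℕ} {b : Bool} {i : ℕ} {x : Fin n} : x ∈ TT n J b i ↔ PP J b i x := by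
  simp [TT]

theorem PP_mono (J i x : ℕ) (b b' : Bool) (h : PP J b i x) : PP J b' (i + 1) x := by
  cases b <;> cases b' <;> simp [PP] at h ⊢ <;> omega

theorem PP_wit (J i : ℕ) (b0 b1 b2 : Bool) :
    ∃ a c, PP J b1 (i + 1) a ∧ ¬ PP J b0 i a ∧ PP J b2 (i + 2) c ∧ ¬ PP J b1 (i + 1) c ∧ c < a
      := by
  by_cases h : J < i + 1
  · refine ⟨if b1 then 3 * (i + 1) - J - 1 else 3 * (i + 1) - J, 3 * (i + 1) - J - 2, ?_⟩
    cases b0 <;> cases b1 <;> cases b2 <;> simp [PP] <;> omega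
  · by_cases hi : i = 0
    · subst hi
      cases b1
      · refine ⟨J, J - 1, ?_⟩
        cases b0 <;> cases b2 <;> simp [PP] <;> omega
      · refine ⟨J + 1, J, ?_⟩
        cases b0 <;> cases b2 <;> simp [PP] <;> omega
    · by_cases h2 : i = 1 ∧ b0 = true
      · obtain ⟨rfl, rfl⟩ := h2
        refine ⟨J, J - 2, ?_⟩
        cases b1 <;> cases b2 <;> simp [PP] <;> omega
      · refine ⟨J - i, J - i - 1, ?_⟩
        cases b0 <;> cases b1 <;> cases b2 <;> simp [PP] at h2 ⊢ <;> omega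

theorem PP_bound (J i x : ℕ) (b : Bool) (h : PP J b i x) : x + J ≤ 3 * i ∨ (x ≤ J + i ∧ i ≤ J) := by
  cases b <;> simp [PP] at h <;> omega

/-- description of the blocks of the facet -/
theorem blk (J i x : ℕ) (h : PP J true (i + 1) x) (h' : ¬ PP J true i x) :
    (i = 0 ∧ 1 ≤ J ∧ (x + 1 = J ∨ x = J + 1)) ∨ (i = 1 ∧ 2 ≤ J ∧ (x = J ∨ x = J + 2)) ∨
    (2 ≤ i ∧ i < J ∧ (x + i = J ∨ x = J + i + 1)) ∨
    (i = J ∧ 2 ≤ J ∧ (x = 0 ∨ x = 2 * J + 2)) ∨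
    (i = J ∧ J = 1 ∧ (x = 1 ∨ x = 4)) ∨ (i = J ∧ J = 0 ∧ (x = 0 ∨ x = 2)) ∨
    (J < i ∧ (x + J + 2 = 3 * i ∨ x + J = 3 * i ∨ x + J = 3 * i + 2)) := by
  have h1 : (i = 0 ∧ 1 ≤ J ∧ (x + 1 = J ∨ x = J + 1)) ∨
      (1 ≤ i ∧ i + 1 ≤ J ∧ J ≤ x + i ∧ x ≤ J + i + 1) ∨
      (J ≤ i ∧ (x + J ≤ 3 * i ∨ x + J = 3 * i + 2)) := by
    clear h'
    simp [PP] at h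
    omega
  clear h
  rcases Nat.lt_or_ge J i with hJ | hJ
  · have h2 : ¬ (x + J + 3 ≤ 3 * i) ∧ x + J + 1 ≠ 3 * i := by
      clear h1
      simp [PP] at h'
      omega
    iterate 6 right
    omega
  · rcases Nat.lt_or_ge i 2 with hi | hi
    · have h2 : i = 0 ∨ (i = 1 ∧ x + 1 ≠ J ∧ x ≠ J + 1) := by
        clear h1
        simp [PP] at h'
        omega
      rcases h2 with rfl | ⟨rfl, h3, h4⟩
      · rcases Nat.eq_zero_or_pos J with rfl | hJ0
        · iterate 5 right
          left
          omega
        · left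
          omega
      · rcases Nat.lt_or_ge J 2 with hJ2 | hJ2
        · iterate 4 right
          left
          omega
        · right
          left
          omega
    · have h2 : x + i ≤ J ∨ J + i < x := by
        clear h1
        simp [PP] at h'
        omega
      rcases Nat.lt_or_ge i J with hiJ | hiJ
      · iterate 2 right
        left
        omega
      · iterate 3 right
        left
        omega

section chain
variable {k n J : ℕ}

theorem TT_zero (b : Bool) : TT n J b 0 = ∅ := by
  ext x
  rw [mem_TT]
  cases b <;> simp [PP]

theorem TT_top (hJ : J ≤ k + 1) (hn : n = 3 * k + 4 - J) (b : Bool) :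
    TT n J b (k + 2) = Finset.univ := by
  ext x
  have := x.2
  rw [mem_TT]
  cases b <;> simp [PP] <;> omega

theorem TT_wit (hJ : J ≤ k + 1) (hn : n = 3 * k + 4 - J) (i : ℕ) (hi : i ≤ k) (b0 b1 b2 : Bool) :
    ∃ a ∈ TT n J b1 (i + 1) \ TT n J b0 i, ∃ c ∈ TT n J b2 (i + 2) \ TT n J b1 (i + 1), c < a := by
  obtain ⟨a, c, h1, h2, h3, h4, h5⟩ := PP_wit J i b0 b1 b2
  have := PP_bound J _ _ _ h1
  have ha : a < n := by omega
  refine ⟨⟨a, ha⟩, ?_, ⟨c, by omega⟩, ?_, h5⟩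
  · simpa [mem_TT] using ⟨h1, h2⟩
  · simpa [mem_TT] using ⟨h3, h4⟩

theorem TT_ssub (hJ : J ≤ k + 1) (hn : n = 3 * k + 4 - J) (i : ℕ) (hi : i ≤ k + 1) (b0 b1 : Bool) :
    TT n J b0 i ⊂ TT n J b1 (i + 1) := by
  rw [Finset.ssubset_iff_of_subset]
  · rcases Nat.lt_or_ge i (k + 1) with h | h
    · obtain ⟨a, ha, -⟩ := TT_wit hJ hn i (by omega) b0 b1 true
      exact ⟨a, by simpa using ha⟩
    · obtain rfl : i = k + 1 := by omega
      obtain ⟨-, -, c, hc, -⟩ := TT_wit hJ hn k le_rfl true b0 b1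
      exact ⟨c, by simpa using hc⟩
  · intro x hx
    rw [mem_TT] at *
    exact PP_mono _ _ _ _ _ hx

/-- the facet property, one slot at a time -/
theorem facet_slot (hJ : J ≤ k + 1) (hn : n = 3 * k + 4 - J) (i : ℕ) (hi : i ≤ k + 1)
    (X : Finset (Fin n))
    (H1 : 1 ≤ i → ∃ a ∈ TT n J true i \ TT n J true (i - 1), ∃ c ∈ X \ TT n J true i, c < a)
    (H2 : ∃ a ∈ X \ TT n J true i, ∃ c ∈ TT n J true (i + 1) \ X, c < a)
    (HX : X ⊆ TT n J true (i + 1))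
    (H3 : i ≤ k → ∃ a ∈ TT n J true (i + 1) \ X,
      ∃ c ∈ TT n J true (i + 2) \ TT n J true (i + 1), c < a)
    (HX' : TT n J true i ⊆ X) : False := by
  have key : ∀ x y : Fin n, x ∈ X → y ∉ X → (x : ℕ) ≠ y := by
    intro x y hx hy h
    exact hy (Fin.ext h ▸ hx)
  obtain ⟨a2, ha2, c2, hc2, h2⟩ := H2
  rw [Finset.mem_sdiff] at ha2 hc2
  have k1 := key _ _ ha2.1 hc2.2
  have B1 := blk J i a2 (mem_TT.1 (HX ha2.1)) (fun h => ha2.2 (mem_TT.2 h))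
  have B2 := blk J i c2 (mem_TT.1 hc2.1) (fun h => hc2.2 (HX' (mem_TT.2 h)))
  have l1 := a2.2
  have l2 := c2.2
  rw [Fin.lt_def] at h2
  rcases Nat.eq_zero_or_pos i with rfl | hi0
  · obtain ⟨a3, ha3, c3, hc3, h3⟩ := H3 (by omega)
    rw [Finset.mem_sdiff] at ha3 hc3
    have k3 := key _ _ ha2.1 ha3.2
    have B3 := blk J 0 a3 (mem_TT.1 ha3.1) (fun h => ha3.2 (HX' (mem_TT.2 h)))
    have B4 := blk J 1 c3 (mem_TT.1 hc3.1) (fun h => hc3.2 (mem_TT.2 h))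
    rw [Fin.lt_def] at h3
    have C3 : J ≤ c3.1 ∧ (J = 0 → 1 ≤ c3.1) := by
      clear B1 B2 B3
      omega
    clear B4
    omega
  · obtain ⟨i, rfl⟩ : ∃ j, i = j + 1 := ⟨i - 1, by omega⟩
    obtain ⟨a1, ha1, c1, hc1, h1⟩ := H1 (by omega)
    clear H1
    rw [Finset.mem_sdiff] at ha1 hc1
    have B3 := blk J i a1 (mem_TT.1 ha1.1) (fun h => ha1.2 (mem_TT.2 h))
    have B4 := blk J (i + 1) c1 (mem_TT.1 (HX hc1.1)) (fun h => hc1.2 (mem_TT.2 h))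
    have k4 := key _ _ hc1.1 hc2.2
    rw [Fin.lt_def] at h1
    rcases Nat.lt_or_ge J (i + 1) with hJi | hJi
    · have A1 : a1.1 + J ≤ 3 * i + 2 := by
        clear B1 B2 B4
        omega
      have C1 : c1.1 + J = 3 * i + 1 := by
        clear B1 B2 B3
        omega
      clear B3 B4
      have A2 : a2.1 + J = 3 * i + 1 ∨ a2.1 + J = 3 * i + 3 ∨ a2.1 + J = 3 * i + 5 := by
        clear B2
        omega
      clear B1
      have C2 : c2.1 + J = 3 * i + 1 ∨ c2.1 + J = 3 * i + 3 ∨ c2.1 + J = 3 * i + 5 := by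
        omega
      clear B2
      rcases Nat.lt_or_ge k (i + 1) with hk | hk
      · clear H3
        omega
      · obtain ⟨a3, ha3, c3, hc3, h3⟩ := H3 hk
        clear H3
        rw [Finset.mem_sdiff] at ha3 hc3
        have k3 := key _ _ ha2.1 ha3.2
        have B3 := blk J _ a3 (mem_TT.1 ha3.1) (fun h => ha3.2 (HX' (mem_TT.2 h)))
        have B4 := blk J _ c3 (mem_TT.1 hc3.1) (fun h => hc3.2 (mem_TT.2 h))
        rw [Fin.lt_def] at h3
        have C3 : c3.1 + J ≥ 3 * i + 4 := by
          clear B3 A2 C2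
          omega
        clear B4
        have A3 : a3.1 + J = 3 * i + 5 := by
          clear A2 C2
          omega
        clear B3
        omega
    · clear H3
      have A1 : a1.1 ≤ J + i + 1 := by
        clear B1 B2 B4
        omega
      clear B3
      have C1 : (i = 0 ∧ J = 1 ∧ c1.1 = 1) ∨ (i = 0 ∧ 2 ≤ J ∧ c1.1 = J) ∨
          (1 ≤ i ∧ c1.1 + (i + 1) = J) := by
        clear B1 B2
        omega
      clear B4
      have C2 : (i = 0 ∧ J = 1 ∧ c2.1 = 1) ∨ (i = 0 ∧ 2 ≤ J ∧ c2.1 = J) ∨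
          (1 ≤ i ∧ c2.1 + (i + 1) = J) := by
        clear C1
        omega
      omega

/-- extension of a choice function to all indices -/
def ext1 (e : Fin (k + 1) → Bool) (i : ℕ) : Bool :=
  if h : i - 1 < k + 1 then e ⟨i - 1, h⟩ else true

/-- the chain attached to a choice function -/
noncomputable def chn (n J : ℕ) (e : Fin (k + 1) → Bool) : List (Finset (Fin n)) :=
  List.ofFn fun i : Fin (k + 1) => TT n J (e i) (i + 1)

theorem chn_length (e : Fin (k + 1) → Bool) : (chn n J e).length = k + 1 := by simp [chn]

theorem sent_length (L : List (Finset (Fin n))) : (withSent n L).length = L.length + 2 := by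
  simp [withSent]

theorem sent_zero (L : List (Finset (Fin n))) (h : 0 < (withSent n L).length) :
    (withSent n L)[0] = ∅ := by
  simp [withSent]

theorem sent_succ (L : List (Finset (Fin n))) (i : ℕ) (hi : i < L.length)
    (h : i + 1 < (withSent n L).length) :
    (withSent n L)[i + 1] = L[i] := by
  simp [withSent, hi]

theorem sent_top (L : List (Finset (Fin n))) (i : ℕ) (hi : i = L.length)
    (h : i + 1 < (withSent n L).length) :
    (withSent n L)[i + 1] = Finset.univ := by
  subst hi
  simp [withSent]

theorem sent_chn (hJ : J ≤ k + 1) (hn : n = 3 * k + 4 - J) (e : Fin (k + 1) → Bool) (i : ℕ)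
    (h : i < (withSent n (chn n J e)).length) :
    (withSent n (chn n J e))[i] = TT n J (ext1 e i) i := by
  rcases i with _ | i
  · rw [sent_zero, TT_zero]
  · have h' := h
    rw [sent_length, chn_length] at h'
    by_cases hi : i < k + 1
    · rw [sent_succ _ _ (by rwa [chn_length])]
      simp only [chn, List.getElem_ofFn]
      simp [ext1, hi]
    · obtain rfl : i = k + 1 := by omega
      rw [sent_top _ _ (by rw [chn_length]), TT_top hJ hn]

theorem chn_face (hJ : J ≤ k + 1) (hn : n = 3 * k + 4 - J) (e : Fin (k + 1) → Bool) :
    IsFace n (chn n J e) := by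
  constructor
  · refine List.isChain_iff_getElem.2 ?_
    intro i h
    rw [sent_chn hJ hn, sent_chn hJ hn]
    rw [sent_length, chn_length] at h
    exact TT_ssub hJ hn i (by omega) _ _
  · intro i h
    simp only [List.get_eq_getElem]
    rw [sent_chn hJ hn, sent_chn hJ hn, sent_chn hJ hn]
    rw [sent_length, chn_length] at h
    exact TT_wit hJ hn i (by omega) _ _ _

theorem TT_ne (hJ : J ≤ k + 1) (hn : n = 3 * k + 4 - J) (i : ℕ) (hi : i < k + 1) :
    TT n J false (i + 1) ≠ TT n J true (i + 1) := by
  intro h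
  by_cases h1 : J < i + 1
  · have : (⟨3 * (i + 1) - J, by omega⟩ : Fin n) ∈ TT n J true (i + 1) := by
      rw [← h, mem_TT]
      simp [PP]
      omega
    rw [mem_TT] at this
    simp [PP] at this
    omega
  · have : (⟨J + (i + 1), by omega⟩ : Fin n) ∈ TT n J false (i + 1) := by
      rw [h, mem_TT]
      simp [PP]
      omega
    rw [mem_TT] at this
    simp [PP] at this
    omega

theorem chn_inj (hJ : J ≤ k + 1) (hn : n = 3 * k + 4 - J) (e : Fin (k + 1) → Bool)
    (h : chn n J e = chn n J (fun _ : Fin (k + 1) => true)) : e = fun _ => true := by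
  have := List.ofFn_injective h
  funext i
  have hi := congrFun this i
  by_contra hne
  simp only [Bool.not_eq_true] at hne
  simp only [hne] at hi
  exact TT_ne hJ hn i i.2 hi

theorem sent_erase (L : List (Finset (Fin n))) (j : ℕ) (hj : j < L.length) :
    (withSent n L).eraseIdx (j + 1) = withSent n (L.eraseIdx j) := by
  simp [withSent, List.eraseIdx_append_of_lt_length, hj]

theorem chn_facet (hJ : J ≤ k + 1) (hn : n = 3 * k + 4 - J) (L : List (Finset (Fin n)))
    (hL : IsFace n L) (hlen : L.length = k + 2) (j : ℕ) (hj : j < k + 2)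
    (h : L.eraseIdx j = chn n J (fun _ : Fin (k + 1) => true)) : False := by
  have hW : (withSent n L).eraseIdx (j + 1) = withSent n (chn n J (fun _ : Fin (k + 1) => true)) := by
    rw [sent_erase _ _ (by omega), h]
  have hl : (withSent n L).length = k + 4 := by rw [sent_length, hlen]
  have hl2 : (withSent n (chn n J (fun _ : Fin (k + 1) => true))).length = k + 3 := by
    rw [sent_length, chn_length]
  have lo : ∀ t (ht : t ≤ j), (withSent n L)[t]'(by omega) = TT n J true t := by
    intro t ht
    have := sent_chn hJ hn (fun _ : Fin (k + 1) => true) t (by omega)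
    simp only [← hW, List.getElem_eraseIdx] at this
    rw [dif_pos (by omega)] at this
    simpa [ext1] using this
  have hi : ∀ t (ht : j + 1 ≤ t) (ht' : t < k + 3), (withSent n L)[t + 1]'(by omega) = TT n J true t := by
    intro t ht ht'
    have := sent_chn hJ hn (fun _ : Fin (k + 1) => true) t (by omega)
    simp only [← hW, List.getElem_eraseIdx] at this
    rw [dif_neg (by omega)] at this
    simpa [ext1] using this
  obtain ⟨hc, hd⟩ := hL
  replace hc := List.isChain_iff_getElem.1 hc
  simp only [List.get_eq_getElem] at hd
  refine facet_slot hJ hn j (by omega) ((withSent n L)[j + 1]'(by omega)) ?_ ?_ ?_ ?_ ?_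
  · intro h1
    obtain ⟨j, rfl⟩ : ∃ j', j = j' + 1 := ⟨j - 1, by omega⟩
    have := hd j (by omega)
    rw [lo _ le_rfl, lo j (by omega)] at this
    exact this
  · have := hd j (by omega)
    rw [lo _ le_rfl, hi (j + 1) le_rfl (by omega)] at this
    exact this
  · have := hc (j + 1) (by omega)
    rw [hi (j + 1) le_rfl (by omega)] at this
    exact this.subset
  · intro h1
    have := hd (j + 1) (by omega)
    rw [hi (j + 1) le_rfl (by omega), hi (j + 2) (by omega) (by omega)] at this
    exact this
  · have := hc j (by omega)
    rw [lo _ le_rfl] at this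
    exact this.subset

end chain

open scoped Classical in
/-- basis chain of a list, zero if it is not a face of the right length -/
noncomputable def sgl (n k : ℕ) (L : List (Finset (Fin n))) : HFace n k →₀ ℤ :=
  if h : IsFace n L ∧ L.length = k then Finsupp.single (⟨L, h⟩ : HFace n k) (1 : ℤ) else 0

open scoped Classical in
theorem sgl_smul (n k : ℕ) (M : List (Finset (Fin n))) (c : ℤ) :
    (if h : IsFace n M ∧ M.length = k then
      Finsupp.single (⟨M, h⟩ : HFace n k) c else 0) = c • sgl n k M := by
  unfold sgl
  split_ifs with h
  · exact ((Finsupp.smul_single c (⟨M, h⟩ : HFace n k) (1 : ℤ)).trans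
      (by rw [smul_eq_mul, mul_one])).symm
  · exact (smul_zero c).symm

theorem sgl_apply (n k : ℕ) (M : List (Finset (Fin n))) (F : HFace n k) (h : M ≠ F.1) :
    sgl n k M F = 0 := by
  unfold sgl
  split_ifs with h1
  · refine Finsupp.single_eq_of_ne ?_
    rintro rfl
    exact h rfl
  · rfl

theorem bdryElem_eq (n k : ℕ) (L : HFace n (k + 1)) :
    bdryElem n k L = ∑ i : Fin (k + 1), ((-1 : ℤ) ^ (i : ℕ)) • sgl n k (L.1.eraseIdx i) := by
  unfold bdryElem
  exact Finset.sum_congr rfl fun i _ => sgl_smul _ _ _ _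

theorem bdry_single (n k : ℕ) (L : HFace n (k + 1)) (c : ℤ) :
    bdry n k (Finsupp.single L c) = c • bdryElem n k L := by
  simp [bdry]

/-- sign of a choice function -/
def sg {k : ℕ} (e : Fin (k + 1) → Bool) : ℤ := ∏ i, if e i then 1 else -1

theorem sg_update {k : ℕ} (e : Fin (k + 1) → Bool) (i : Fin (k + 1)) :
    sg (Function.update e i (!e i)) = - sg e := by
  unfold sg
  rw [Fintype.prod_eq_mul_prod_compl i, Fintype.prod_eq_mul_prod_compl i]
  have : ∀ j ∈ ({i}ᶜ : Finset (Fin (k + 1))),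
      (if Function.update e i (!e i) j then (1 : ℤ) else -1) = if e j then 1 else -1 := by
    intro j hj
    rw [Function.update_of_ne (by simpa using hj)]
  rw [Finset.prod_congr rfl this]
  cases h : e i <;> simp [h]

theorem chn_erase {k n J : ℕ} (e : Fin (k + 1) → Bool) (i : Fin (k + 1)) (b : Bool) :
    (chn n J (Function.update e i b)).eraseIdx i = (chn n J e).eraseIdx i := by
  apply List.ext_getElem
  · simp [List.length_eraseIdx, chn_length]
  · intro t h1 h2
    simp only [List.getElem_eraseIdx, chn, List.getElem_ofFn]
    split_ifs with h
    · rw [Function.update_of_ne]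
      intro h'
      have := congrArg Fin.val h'
      simp at this
      omega
    · rw [Function.update_of_ne]
      intro h'
      have := congrArg Fin.val h'
      simp at this
      omega

/-- for all `k ≥ 0` and `2k+3 ≤ n ≤ 3k+4`, the reduced homology
group `H̃ₖ(Δₙ; ℤ)` is nonzero. -/
theorem reduced_homology_nontrivial (k n : ℕ) (h1 : 2 * k + 3 ≤ n) (h2 : n ≤ 3 * k + 4) :
    Nontrivial (ReducedHomology n k) := by
  classical
  obtain ⟨J, hJ, hn⟩ : ∃ J, J ≤ k + 1 ∧ n = 3 * k + 4 - J := ⟨3 * k + 4 - n, by omega, by omega⟩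
  let Fc : (Fin (k + 1) → Bool) → HFace n (k + 1) :=
    fun e => ⟨chn n J e, chn_face hJ hn e, chn_length e⟩
  let z : HFace n (k + 1) →₀ ℤ := ∑ e : Fin (k + 1) → Bool, Finsupp.single (Fc e) (sg e)
  have hz : bdry n k z = 0 := by
    simp only [z, map_sum, bdry_single, bdryElem_eq, Finset.smul_sum]
    rw [Finset.sum_comm]
    refine Finset.sum_eq_zero fun i _ => ?_
    refine Finset.sum_involution (fun e _ => Function.update e i (!e i)) ?_ ?_ ?_ ?_
    · intro e _
      simp only [Fc, chn_erase, sg_update]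
      simp
    · intro e _ _ h
      have := congrFun h i
      simp at this
    · intro e _
      simp
    · intro e _
      simp
  have hφ : ∀ w, (bdry n (k + 1) w) (Fc fun _ => true) = 0 := by
    intro w
    induction w using Finsupp.induction_linear with
    | zero => simp
    | add f g hf hg => rw [map_add, Finsupp.add_apply, hf, hg, add_zero]
    | single L c =>
      rw [bdry_single, bdryElem_eq, Finsupp.smul_apply, Finsupp.finsetSum_apply]
      rw [Finset.sum_eq_zero, smul_zero]
      intro i _
      rw [Finsupp.smul_apply, sgl_apply, smul_zero]
      intro h'
      exact chn_facet hJ hn L.1 L.2.1 L.2.2 i i.2 h'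
  have hz1 : z (Fc fun _ => true) = 1 := by
    simp only [z, Finsupp.finsetSum_apply]
    rw [Finset.sum_eq_single (fun _ => true)]
    · simp [sg]
    · intro e _ he
      rw [Finsupp.single_apply, if_neg]
      intro h
      exact he (chn_inj hJ hn e (congrArg Subtype.val h))
    · simp
  unfold ReducedHomology
  rw [Submodule.Quotient.nontrivial_iff]
  intro htop
  have hmem : (⟨z, hz⟩ : LinearMap.ker (bdry n k)) ∈
      Submodule.comap (LinearMap.ker (bdry n k)).subtype (LinearMap.range (bdry n (k + 1))) := by
    rw [htop]
    trivial
  obtain ⟨w, hw⟩ := hmem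
  have := hφ w
  rw [hw] at this
  simp [hz1] at this
end

section
/- For all integers i ≥ 0 and n ≥ 2, the reduced homology H̃_i(Δ_n; ℤ) is nonzero if and only if (3i+5)/2 ≤ n ≤ 3i+4, equivalently (n−4)/3 ≤ i ≤ (2n−5)/3. -/
set_option linter.unusedSectionVars false
namespace ER
open Finsupp

section basic
variable {α : Type} [LinearOrder α] {R : Type} [CommRing R]

/-- Chains on words of blocks. -/
abbrev W (R α : Type) [CommRing R] := List (Finset α) →₀ R

/-- ground set of a word -/
def gs : List (Finset α) → Finset α
  | [] => ∅
  | B :: L => B ∪ gs L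

def lk (B C : Finset α) : Prop := ∃ a ∈ B, ∃ c ∈ C, c < a

def link (B : Finset α) : List (Finset α) → Prop
  | [] => True
  | C :: _ => lk B C

def OK : List (Finset α) → Prop
  | [] => True
  | B :: L => B.Nonempty ∧ Disjoint B (gs L) ∧ link B L ∧ OK L

/-- valid words on the ground set `S` with `k` blocks -/
def Val (S : Finset α) (k : ℕ) : Set (List (Finset α)) :=
  {L | OK L ∧ gs L = S ∧ L.length = k}

variable (R) in
noncomputable def cons (B : Finset α) : W R α →ₗ[R] W R α := Finsupp.lmapDomain R R (B :: ·)

noncomputable def mw (R : Type) [CommRing R] (B : Finset α) : List (Finset α) → W R α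
  | [] => 0
  | C :: L => single ((B ∪ C) :: L) 1

variable (R) in
noncomputable def mg (B : Finset α) : W R α →ₗ[R] W R α := Finsupp.linearCombination R (mw R B)

noncomputable def dw (R : Type) [CommRing R] : List (Finset α) → W R α
  | [] => 0
  | B :: L => mw R B L - cons R B (dw R L)

variable (R) in
noncomputable def d : W R α →ₗ[R] W R α := Finsupp.linearCombination R (dw R)

@[simp] lemma cons_single (B : Finset α) (L : List (Finset α)) (r : R) :
    cons R B (single L r) = single (B :: L) r := by simp [cons]

@[simp] lemma mg_single (B : Finset α) (L : List (Finset α)) (r : R) :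
    mg R B (single L r) = r • mw R B L := by simp [mg]

@[simp] lemma d_single (L : List (Finset α)) (r : R) :
    d R (single L r) = r • dw R L := by simp [d]

@[simp] lemma mw_nil (B : Finset α) : mw R B [] = 0 := rfl
@[simp] lemma mw_cons (B C : Finset α) (L) : mw R B (C :: L) = single ((B ∪ C) :: L) 1 := rfl
@[simp] lemma dw_nil : dw R ([] : List (Finset α)) = 0 := rfl
lemma dw_cons (B : Finset α) (L) : dw R (B :: L) = mw R B L - cons R B (dw R L) := rfl

lemma W_ext {M : Type} [AddCommGroup M] [Module R M] {f g : W R α →ₗ[R] M}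
    (h : ∀ L, f (single L 1) = g (single L 1)) (x : W R α) : f x = g x := by
  have : f = g := Finsupp.lhom_ext' fun L => by
    ext; simpa using h L
  rw [this]

lemma d_cons (B : Finset α) (x : W R α) : d R (cons R B x) = mg R B x - cons R B (d R x) := by
  refine W_ext (f := d R ∘ₗ cons R B) (g := mg R B - cons R B ∘ₗ d R) (fun L => ?_) x
  simp [dw_cons]

lemma mg_cons (B C : Finset α) (x : W R α) : mg R B (cons R C x) = cons R (B ∪ C) x := by
  refine W_ext (f := mg R B ∘ₗ cons R C) (g := cons R (B ∪ C)) (fun L => ?_) x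
  simp

lemma mg_mg (B C : Finset α) (x : W R α) : mg R B (mg R C x) = mg R (B ∪ C) x := by
  refine W_ext (f := mg R B ∘ₗ mg R C) (g := mg R (B ∪ C)) (fun L => ?_) x
  cases L <;> simp [Finset.union_assoc]

lemma d_mg (B : Finset α) (x : W R α) : d R (mg R B x) = mg R B (d R x) := by
  refine W_ext (f := d R ∘ₗ mg R B) (g := mg R B ∘ₗ d R) (fun L => ?_) x
  cases L with
  | nil => simp
  | cons C L =>
    have : mw R B L = mg R B (single L 1) := by simp
    simp [dw_cons, mg_cons]
    cases L <;> simp [Finset.union_assoc]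

lemma d_d (x : W R α) : d R (d R x) = 0 := by
  refine W_ext (f := d R ∘ₗ d R) (g := 0) (fun L => ?_) x
  induction L with
  | nil => simp
  | cons B L ih =>
    have h1 : d R (mw R B L) = mg R B (dw R L) := by
      have := d_mg (R := R) B (single L 1); simpa using this
    simp [dw_cons, d_cons, h1] at ih ⊢
    rw [ih]; simp

variable (R) in
/-- chains with `k` blocks on ground set `S` -/
def D (S : Finset α) (k : ℕ) : Submodule R (W R α) := Finsupp.supported R R (Val S k)

/-- `Mg G F`: `F` is obtained from `G` by merging two adjacent blocks. -/
inductive Mg : List (Finset α) → List (Finset α) → Prop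
  | head (B C L) : Mg (B :: C :: L) ((B ∪ C) :: L)
  | tail (B) {L L'} : Mg L L' → Mg (B :: L) (B :: L')

lemma Mg_of_dw {G F : List (Finset α)} (h : dw R G F ≠ 0) : Mg G F := by
  induction G generalizing F with
  | nil => simp at h
  | cons B L ih =>
    rw [dw_cons, Finsupp.sub_apply] at h
    by_cases h1 : mw R B L F = 0
    · rw [h1, zero_sub, neg_ne_zero] at h
      have : F ∈ (Finsupp.mapDomain (B :: ·) (dw R L)).support := by
        simpa [cons] using h
      obtain ⟨F', hF', rfl⟩ := Finset.mem_image.1 (Finsupp.mapDomain_support this)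
      exact Mg.tail B (ih (by simpa using hF'))
    · cases L with
      | nil => simp at h1
      | cons C L =>
        simp only [mw_cons, Finsupp.single_apply] at h1
        split_ifs at h1 with h2
        · subst h2; exact Mg.head B C L
        · simp at h1

lemma Mg.gs {G F : List (Finset α)} (h : Mg G F) : ER.gs F = ER.gs G := by
  induction h with
  | head B C L => simp [ER.gs, Finset.union_assoc]
  | tail B h ih => simp [ER.gs, ih]

lemma Mg.len {G F : List (Finset α)} (h : Mg G F) : G.length = F.length + 1 := by
  induction h with
  | head B C L => simp
  | tail B h ih => simp [ih]

lemma lk.mono {B C B' C' : Finset α} (h : lk B C) (hB : B ⊆ B') (hC : C ⊆ C') : lk B' C' := by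
  obtain ⟨a, ha, c, hc, h⟩ := h
  exact ⟨a, hB ha, c, hC hc, h⟩

lemma Mg.link {G F : List (Finset α)} (h : Mg G F) {B} (hl : link B G) : ER.link B F := by
  cases h with
  | head C E L => exact lk.mono hl subset_rfl Finset.subset_union_left
  | tail C h => exact hl

lemma link_mono {B B' : Finset α} (h : B ⊆ B') {L} (hl : link B L) : link B' L := by
  cases L with
  | nil => trivial
  | cons C L => exact lk.mono hl h subset_rfl

lemma Mg.OK {G F : List (Finset α)} (h : Mg G F) (hG : OK G) : ER.OK F := by
  induction h with
  | head B C L =>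
    obtain ⟨h1, h2, h3, h4, h5, h6, h7⟩ := hG
    simp only [ER.gs, Finset.disjoint_union_right] at h2
    exact ⟨h1.mono Finset.subset_union_left, Finset.disjoint_union_left.2 ⟨h2.2, h5⟩,
      link_mono Finset.subset_union_right h6, h7⟩
  | tail B h ih =>
    obtain ⟨h1, h2, h3, h4⟩ := hG
    exact ⟨h1, h.gs ▸ h2, h.link h3, ih h4⟩

lemma Mg.val {G F : List (Finset α)} (h : Mg G F) {S k} (hG : G ∈ Val S (k + 1)) : F ∈ Val S k :=
  ⟨h.OK hG.1, h.gs.trans hG.2.1, by have := h.len; have := hG.2.2; omega⟩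

lemma single_mem_D {S : Finset α} {k} {L} (h : L ∈ Val S k) (r : R) : single L r ∈ D R S k :=
  Finsupp.single_mem_supported R r h

lemma mem_D_iff {S : Finset α} {k} {x : W R α} : x ∈ D R S k ↔ ∀ L, x L ≠ 0 → L ∈ Val S k := by
  simp [D, Finsupp.mem_supported, Set.subset_def]

lemma map_mem_supported {A : Set (List (Finset α))} {N : Submodule R (W R α)}
    {f : W R α →ₗ[R] W R α} (hf : ∀ L ∈ A, f (single L 1) ∈ N) {x}
    (hx : x ∈ Finsupp.supported R R A) : f x ∈ N := by
  rw [Finsupp.supported_eq_span_single] at hx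
  induction hx using Submodule.span_induction with
  | mem x h => obtain ⟨L, hL, rfl⟩ := h; exact hf L hL
  | zero => simp
  | add x y _ _ hx hy => rw [map_add]; exact N.add_mem hx hy
  | smul r x _ hx => rw [map_smul]; exact N.smul_mem _ hx

lemma map_mem_D {S : Finset α} {k} {N : Submodule R (W R α)}
    {f : W R α →ₗ[R] W R α} (hf : ∀ L ∈ Val S k, f (single L 1) ∈ N) {x}
    (hx : x ∈ D R S k) : f x ∈ N := map_mem_supported hf hx

lemma eq_on_D {S : Finset α} {k} {M : Type} [AddCommGroup M] [Module R M]
    {f g : W R α →ₗ[R] M} (hf : ∀ L ∈ Val S k, f (single L 1) = g (single L 1)) {x}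
    (hx : x ∈ D R S k) : f x = g x := by
  rw [D, Finsupp.supported_eq_span_single] at hx
  induction hx using Submodule.span_induction with
  | mem x h => obtain ⟨L, hL, rfl⟩ := h; exact hf L hL
  | zero => simp
  | add x y _ _ hx hy => simp [hx, hy]
  | smul r x _ hx => simp [hx]

lemma dw_mem {S : Finset α} {k} {L} (hL : L ∈ Val S (k + 1)) : dw R L ∈ D R S k :=
  mem_D_iff.2 fun _ hF => (Mg_of_dw hF).val hL

lemma d_mem {S : Finset α} {k} {x : W R α} (hx : x ∈ D R S (k + 1)) : d R x ∈ D R S k :=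
  map_mem_D (fun L hL => by simpa using dw_mem hL) hx

lemma Val_zero {S : Finset α} {L} (h : L ∈ Val S 0) : L = [] ∧ S = ∅ := by
  have := List.length_eq_zero_iff.1 h.2.2
  subst this; exact ⟨rfl, h.2.1.symm⟩

lemma Val_empty {k : ℕ} {L : List (Finset α)} (h : L ∈ Val ∅ k) : L = [] ∧ k = 0 := by
  cases L with
  | nil => exact ⟨rfl, h.2.2.symm⟩
  | cons B L =>
    have := h.1.1; have h2 := h.2.1
    simp only [gs, Finset.union_eq_empty] at h2
    simp [h2.1] at this

lemma D_eq_zero {S : Finset α} {k} (h : ∀ L, L ∉ Val S k) {x : W R α} (hx : x ∈ D R S k) : x = 0 := by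
  rw [mem_D_iff] at hx
  ext L; by_contra h'; exact h L (hx L h')

lemma d_zero {S : Finset α} {x : W R α} (hx : x ∈ D R S 0) : d R x = 0 := by
  refine eq_on_D (g := 0) (fun L hL => ?_) hx
  simp [(Val_zero hL).1]

variable (R) in
def Ex (S : Finset α) (k : ℕ) : Prop :=
  ∀ c ∈ D R S k, d R c = 0 → ∃ e ∈ D R S (k + 1), d R e = c

end basic
end ER

set_option linter.unusedSectionVars false
namespace ER
open Finsupp
section split
variable {α : Type} [LinearOrder α] {F : Type} [Field F]

lemma linv {K V U : Type} [Field K] [AddCommGroup V] [AddCommGroup U] [Module K V] [Module K U]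
    (f : V →ₗ[K] U) (hf : LinearMap.ker f = ⊥) : ∃ g : U →ₗ[K] V, ∀ x, g (f x) = x := by
  obtain ⟨g, hg⟩ := LinearMap.exists_leftInverse_of_injective f hf
  exact ⟨g, fun x => LinearMap.congr_fun hg x⟩

lemma split_one (S : Finset α) (k : ℕ) : ∃ (q : W F α →ₗ[F] W F α),
    (∀ x ∈ D F S k, q x ∈ D F S k) ∧ (∀ x, d F (q x) = 0) ∧
    (∀ x ∈ D F S k, d F x = 0 → q x = x) := by
  let Z : Submodule F (W F α) := D F S k ⊓ LinearMap.ker (d F)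
  obtain ⟨g, hg⟩ := linv (V := Z) (U := W F α) Z.subtype (by simp)
  refine ⟨Z.subtype ∘ₗ g, fun x hx => (g x).2.1, fun x => (g x).2.2, fun x hx h => ?_⟩
  have := hg ⟨x, hx, h⟩
  simp only [Submodule.subtype_apply] at this
  simp [this]

lemma exists_h : ∃ h : W F α →ₗ[F] W F α, (∀ S k, ∀ x ∈ D F S k, h x ∈ D F S (k + 1)) ∧
    ∀ S k, Ex F S k → ∀ x ∈ D F S k, d F (h x) + h (d F x) = x := by
  classical
  choose q hq1 hq2 hq3 using split_one (α := α) (F := F)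
  -- complements of cycles
  let V : Finset α → ℕ → Submodule F (W F α) := fun S k => D F S k ⊓ LinearMap.ker (q S k)
  have hV : ∀ S k, ∀ x ∈ D F S k, x - q S k x ∈ V S k := by
    intro S k x hx
    refine ⟨Submodule.sub_mem _ hx (hq1 _ _ _ hx), ?_⟩
    simp [LinearMap.mem_ker, hq3 S k _ (hq1 _ _ _ hx) (hq2 _ _ _)]
  have hinj : ∀ S k, ∃ g : W F α →ₗ[F] V S k, ∀ x (hx : x ∈ V S k), g (d F x) = ⟨x, hx⟩ := by
    intro S k
    obtain ⟨g, hg⟩ := linv (V := V S k) (U := W F α) (d F ∘ₗ (V S k).subtype) (by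
      rw [LinearMap.ker_eq_bot']
      rintro ⟨x, hx⟩ h
      have h : d F x = 0 := h
      have := hq3 S k x hx.1 h
      have h2 : q S k x = 0 := hx.2
      ext1
      exact this.symm.trans h2)
    exact ⟨g, fun x hx => hg ⟨x, hx⟩⟩
  choose g hg using hinj
  let hh : Finset α → ℕ → W F α →ₗ[F] W F α := fun S k => (V S (k+1)).subtype ∘ₗ g S (k + 1) ∘ₗ q S k
  let h : W F α →ₗ[F] W F α := Finsupp.linearCombination F
    (fun L => if OK L then hh (gs L) L.length (single L 1) else 0)
  have hhh : ∀ S k, ∀ x ∈ D F S k, h x = hh S k x := by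
    intro S k x hx
    refine eq_on_D (fun L hL => ?_) hx
    obtain ⟨h1, rfl, rfl⟩ := hL
    simp [h, h1]
  refine ⟨h, fun S k x hx => ?_, fun S k hE x hx => ?_⟩
  · rw [hhh S k x hx]
    exact (g S (k+1) _).2.1
  · have e1 : d F (h x) = q S k x := by
      rw [hhh S k x hx]
      obtain ⟨e, he, hde⟩ := hE (q S k x) (hq1 _ _ _ hx) (hq2 _ _ _)
      have : d F (e - q S (k+1) e) = q S k x := by rw [map_sub, hq2, hde, sub_zero]
      have h2 := hg S (k+1) _ (hV S (k+1) e he)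
      simp only [hh, LinearMap.comp_apply]
      rw [← this, h2, this]
      simpa using this
    have e2 : h (d F x) = x - q S k x := by
      cases k with
      | zero => rw [hq3 S 0 x hx (d_zero hx), d_zero hx]; simp
      | succ k =>
        rw [hhh S k _ (d_mem hx)]
        simp only [hh, LinearMap.comp_apply]
        rw [hq3 S k _ (d_mem hx) (d_d x)]
        have : d F x = d F (x - q S (k+1) x) := by rw [map_sub, hq2, sub_zero]
        rw [this, hg S (k+1) _ (hV S (k+1) x hx)]
        rfl
    rw [e1, e2]; abel
end split
end ER

set_option linter.unusedSectionVars false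
namespace ER
open Finsupp
section att
variable {α : Type} [LinearOrder α] {R : Type} [CommRing R]

/-- adjoin `E` to the last block -/
def att (E : Finset α) : List (Finset α) → List (Finset α)
  | [] => [E]
  | [B] => [B ∪ E]
  | B :: C :: L => B :: att E (C :: L)

lemma att_ne_nil (E : Finset α) (X : List (Finset α)) : att E X ≠ [] := by
  match X with
  | [] => simp [att]
  | [B] => simp [att]
  | B :: C :: L => simp [att]

lemma att_len (E : Finset α) (X : List (Finset α)) : (att E X).length = max X.length 1 := by
  match X with
  | [] => simp [att]
  | [B] => simp [att]
  | B :: C :: L => simp [att, att_len E (C :: L)]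

lemma att_gs (E : Finset α) (X : List (Finset α)) : gs (att E X) = gs X ∪ E := by
  match X with
  | [] => simp [att, gs]
  | [B] => simp [att, gs]
  | B :: C :: L =>
    have := att_gs E (C :: L)
    simp only [att, gs] at this ⊢
    rw [this, Finset.union_assoc, Finset.union_assoc, Finset.union_assoc]

lemma gs_append (X Y : List (Finset α)) : gs (X ++ Y) = gs X ∪ gs Y := by
  induction X with
  | nil => simp [gs]
  | cons B L ih => simp [gs, ih]

lemma att_att (E E' : Finset α) (X : List (Finset α)) : att E (att E' X) = att (E' ∪ E) X := by
  match X with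
  | [] => simp [att]
  | [B] => simp [att]
  | B :: C :: L =>
    have := att_att E E' (C :: L)
    obtain ⟨C', L', h⟩ := List.exists_cons_of_ne_nil (att_ne_nil E' (C :: L))
    simp only [att]
    rw [← this, h]; rfl

lemma link_att (E B C : Finset α) (L : List (Finset α)) (h : link B (C :: L)) (Y) :
    link B (att E (C :: L) ++ Y) := by
  cases L with
  | nil => exact lk.mono h subset_rfl Finset.subset_union_left
  | cons C' L => exact h

lemma OK_att {E : Finset α} (hE : E.Nonempty) {X : List (Finset α)} (hX : OK X)
    (hd : Disjoint (gs X) E) : OK (att E X) := by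
  match X with
  | [] => simpa [att, OK, gs, link] using hE
  | [B] => simpa [att, OK, gs, link] using Or.inl hX.1
  | B :: C :: L =>
    obtain ⟨h1, h2, h3, h4⟩ := hX
    rw [gs, Finset.disjoint_union_left] at hd
    refine ⟨h1, ?_, ?_, OK_att hE h4 hd.2⟩
    · rw [att_gs, Finset.disjoint_union_right]; exact ⟨h2, hd.1⟩
    · simpa using link_att E B C L h3 []

lemma link_top {M : α} {B : Finset α} (hB : M ∈ B) {Y : List (Finset α)} (hY : OK Y)
    (hM : ∀ a ∈ gs Y, a < M) : link B Y := by
  cases Y with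
  | nil => trivial
  | cons C L =>
    obtain ⟨c, hc⟩ := hY.1
    exact ⟨M, hB, c, hc, hM c (by simp [gs, hc])⟩

lemma OK_top {M : α} {X Y : List (Finset α)} (hX : OK X) (hY : OK Y)
    (hd : Disjoint (gs X) (gs Y)) (hMX : M ∉ gs X) (hM : ∀ a ∈ gs Y, a < M) :
    OK (att {M} X ++ Y) := by
  have hMY : M ∉ gs Y := fun h => (hM M h).false
  match X with
  | [] =>
    refine ⟨by simp, ?_, link_top (by simp) hY hM, hY⟩
    simpa using hMY
  | [B] =>
    refine ⟨by simp, ?_, link_top (M := M) (by simp) hY hM, hY⟩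
    simp only [gs, Finset.union_empty] at hd
    simp only [List.append_eq, List.nil_append]
    rw [Finset.disjoint_union_left]
    simpa [hd] using hMY
  | B :: C :: L =>
    obtain ⟨h1, h2, h3, h4⟩ := hX
    rw [gs, Finset.disjoint_union_left] at hd
    rw [gs, Finset.mem_union, not_or] at hMX
    refine ⟨h1, ?_, link_att {M} B C L h3 Y, OK_top h4 hY hd.2 hMX.2 hM⟩
    show Disjoint B (gs (att {M} (C :: L) ++ Y))
    rw [gs_append, att_gs, Finset.disjoint_union_right, Finset.disjoint_union_right]
    exact ⟨⟨h2, by simpa using hMX.1⟩, hd.1⟩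

/-- parse a word at the block of `M` -/
def pr (M : α) : List (Finset α) → List (Finset α) × List (Finset α)
  | [] => ([], [])
  | B :: L => if M ∈ B then ((if B = {M} then [] else [B.erase M]), L)
      else (B :: (pr M L).1, (pr M L).2)

lemma pr_att {M : α} {X : List (Finset α)} (hX : OK X) (hMX : M ∉ gs X) (Y) :
    pr M (att {M} X ++ Y) = (X, Y) := by
  match X with
  | [] => simp [att, pr]
  | [B] =>
    have hB : M ∉ B := by simpa [gs] using hMX
    have : B ∪ {M} ≠ {M} := by
      intro h
      obtain ⟨b, hb⟩ := hX.1
      have : b ∈ B ∪ {M} := by simp [hb]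
      rw [h] at this
      simp at this; subst this; exact hB hb
    have h2 : (B ∪ {M}).erase M = B := by
      ext a
      simp only [Finset.mem_erase, Finset.mem_union, Finset.mem_singleton]
      constructor
      · tauto
      · intro h; refine ⟨?_, Or.inl h⟩; rintro rfl; exact hB h
    simp only [att, pr, List.cons_append, List.nil_append, this, if_false, h2]
    simp
  | B :: C :: L =>
    obtain ⟨h1, h2, h3, h4⟩ := hX
    rw [gs, Finset.mem_union, not_or] at hMX
    have := pr_att h4 hMX.2 Y
    simp [att, pr, hMX.1, this]

lemma decomp {M : α} {L : List (Finset α)} (hL : OK L) (hML : M ∈ gs L)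
    (hM : ∀ a ∈ gs L, a ≤ M) : ∃ X Y, L = att {M} X ++ Y ∧ OK X ∧ OK Y ∧ M ∉ gs X ∧ M ∉ gs Y ∧
      Disjoint (gs X) (gs Y) := by
  induction L with
  | nil => simp [gs] at hML
  | cons B L ih =>
    obtain ⟨h1, h2, h3, h4⟩ := hL
    by_cases hB : M ∈ B
    · have hML : M ∉ gs L := Finset.disjoint_left.1 h2 hB
      by_cases hBM : B = {M}
      · exact ⟨[], L, by simp [att, hBM], trivial, h4, by simp [gs], hML, by simp [gs]⟩
      · refine ⟨[B.erase M], L, ?_, ?_, h4, by simp [gs], hML, ?_⟩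
        · have : B.erase M ∪ {M} = B := by
            ext a; simp only [Finset.mem_erase, Finset.mem_union, Finset.mem_singleton]
            constructor
            · rintro (h | rfl); exacts [h.2, hB]
            · intro h; by_cases a = M <;> tauto
          simp [att, this]
        · refine ⟨?_, by simp [gs], trivial, trivial⟩
          rw [Finset.nonempty_iff_ne_empty]
          intro h
          rw [Finset.erase_eq_empty_iff] at h
          rcases h with h | h
          · simp [h] at hB
          · exact hBM h
        · simpa [gs] using h2.mono_left (Finset.erase_subset M B)
    · have hML : M ∈ gs L := by
        simp only [gs, Finset.mem_union] at hML; tauto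
      obtain ⟨X, Y, rfl, hX, hY, hMX, hMY, hd⟩ := ih h4 hML fun a ha => hM a (by simp [gs, ha])
      rw [gs_append, att_gs] at h2
      simp only [Finset.disjoint_union_right, Finset.disjoint_singleton_right] at h2
      have hlk : ∀ C, C ⊆ B ∪ {M} → lk B C → lk B (C.erase M) := by
        rintro C - ⟨a, ha, c, hc, h⟩
        refine ⟨a, ha, c, Finset.mem_erase.2 ⟨?_, hc⟩, h⟩
        rintro rfl
        exact absurd (hM a (by simp [gs, ha])) (not_le.2 h)
      have hne : X ≠ [] := by
        rintro rfl
        obtain ⟨a, ha, c, hc, h⟩ : lk B {M} := h3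
        simp at hc; subst hc
        exact absurd (hM a (by simp [gs, ha])) (not_le.2 h)
      obtain ⟨C, X, rfl⟩ := List.exists_cons_of_ne_nil hne
      refine ⟨B :: C :: X, Y, by simp [att], ⟨h1, h2.1.1, ?_, hX⟩, hY, ?_, hMY, ?_⟩
      · cases X with
        | nil =>
          obtain ⟨a, ha, c, hc, h⟩ : lk B (C ∪ {M}) := h3
          refine ⟨a, ha, c, ?_, h⟩
          simp only [Finset.mem_union, Finset.mem_singleton] at hc
          rcases hc with hc | rfl
          · exact hc
          · exact absurd (hM a (by simp [gs, ha])) (not_le.2 h)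
        | cons C' X => exact h3
      · rw [gs, Finset.mem_union, not_or]; exact ⟨hB, hMX⟩
      · rw [gs, Finset.disjoint_union_left]; exact ⟨h2.2, hd⟩

variable (R) in
noncomputable def u (E : Finset α) : W R α →ₗ[R] W R α := Finsupp.lmapDomain R R (att E)
@[simp] lemma u_single (E : Finset α) (L : List (Finset α)) (r : R) :
    u R E (single L r) = single (att E L) r := by simp [u]

variable (R) in
noncomputable def sg : W R α →ₗ[R] W R α :=
  Finsupp.linearCombination R (fun L => single L ((-1) ^ L.length))
@[simp] lemma sg_single (L : List (Finset α)) (r : R) :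
    sg R (single L r) = (-1 : R) ^ L.length • single L r := by simp [sg, mul_comm]

variable (R) in
noncomputable def cat : W R α →ₗ[R] W R α →ₗ[R] W R α :=
  Finsupp.linearCombination R (fun L => Finsupp.lmapDomain R R (L ++ ·))
@[simp] lemma cat_single (L L' : List (Finset α)) (r s : R) :
    cat R (single L r) (single L' s) = single (L ++ L') (r * s) := by simp [cat]

lemma cat_nil (x : W R α) : cat R (single [] 1) x = x := by
  refine W_ext (f := cat R (single [] 1)) (g := LinearMap.id) (fun L => ?_) x
  simp
lemma cat_nil' (x : W R α) : cat R x (single [] 1) = x := by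
  refine W_ext (f := (cat R).flip (single [] 1)) (g := LinearMap.id) (fun L => ?_) x
  simp

lemma cat_cons (B : Finset α) (x y : W R α) : cat R (cons R B x) y = cons R B (cat R x y) := by
  refine W_ext (f := (cat R).flip y ∘ₗ cons R B) (g := cons R B ∘ₗ (cat R).flip y) (fun L => ?_) x
  refine W_ext (f := (cat R) (cons R B (single L 1))) (g := cons R B ∘ₗ (cat R) (single L 1))
    (fun L => ?_) y
  simp

noncomputable def jw (R : Type) [CommRing R] : List (Finset α) → W R α →ₗ[R] W R α
  | [] => 0
  | [B] => mg R B
  | B :: C :: L => - cons R B ∘ₗ jw R (C :: L)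

variable (R) in
noncomputable def jn : W R α →ₗ[R] W R α →ₗ[R] W R α := Finsupp.linearCombination R (jw R)

@[simp] lemma jn_single (L : List (Finset α)) (r : R) : jn R (single L r) = r • jw R L := by
  simp [jn]

lemma d_cat_w (L : List (Finset α)) (y : W R α) :
    d R (cat R (single L 1) y) = cat R (d R (single L 1)) y + cat R (sg R (single L 1)) (d R y)
      + jn R (single L 1) y := by
  match L with
  | [] => simp [cat_nil, jw]
  | [B] =>
    have h : ∀ y, cat R (single [B] 1) y = cons R B y := by
      intro y
      have := cat_cons B (single [] (1 : R)) y
      rw [cat_nil] at this; simpa using this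
    simp [dw_cons, jw, h, d_cons]; abel
  | B :: C :: L =>
    have ih := d_cat_w (C :: L) y
    have h : ∀ y, cat R (single (B :: C :: L) 1) y = cons R B (cat R (single (C :: L) 1) y) := by
      intro y
      have := cat_cons B (single (C :: L) (1 : R)) y
      simpa using this
    have h' : cat R (single ((B ∪ C) :: L) 1) y = mg R B (cat R (single (C :: L) 1) y) := by
      have := cat_cons (B ∪ C) (single L (1 : R)) y
      have h2 := cat_cons C (single L (1 : R)) y
      simp only [cons_single] at this h2
      rw [h2, mg_cons, this]
    simp only [h, d_cons, ih]
    simp only [d_single, one_smul, sg_single, map_smul, LinearMap.smul_apply, h, jn_single, jw,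
      dw_cons B, mw_cons, map_sub, LinearMap.sub_apply, h', cat_cons, LinearMap.neg_apply,
      LinearMap.comp_apply, map_add, List.length_cons, pow_succ]
    simp
    abel
termination_by L.length

lemma d_cat (x y : W R α) :
    d R (cat R x y) = cat R (d R x) y + cat R (sg R x) (d R y) + jn R x y := by
  refine W_ext (f := d R ∘ₗ (cat R).flip y)
    (g := (cat R).flip y ∘ₗ d R + (cat R).flip (d R y) ∘ₗ sg R + (jn R).flip y) (fun L => ?_) x
  exact d_cat_w L y

lemma eq_on_supp {A : Set (List (Finset α))} {M : Type} [AddCommGroup M] [Module R M]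
    {f g : W R α →ₗ[R] M} (hf : ∀ L ∈ A, f (single L 1) = g (single L 1)) {x}
    (hx : x ∈ Finsupp.supported R R A) : f x = g x := by
  rw [Finsupp.supported_eq_span_single] at hx
  induction hx using Submodule.span_induction with
  | mem x h => obtain ⟨L, hL, rfl⟩ := h; exact hf L hL
  | zero => simp
  | add x y _ _ hx hy => simp [hx, hy]
  | smul r x _ hx => simp [hx]

lemma sg_len {m : ℕ} {y : W R α}
    (hy : y ∈ Finsupp.supported R R {F : List (Finset α) | F.length = m}) :
    sg R y = (-1 : R) ^ m • y := by
  refine eq_on_supp (f := sg R) (g := (-1 : R) ^ m • LinearMap.id) (fun L hL => ?_) hy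
  have : L.length = m := hL
  simp [this]

lemma d_sg (x : W R α) : d R (sg R x) = - sg R (d R x) := by
  refine W_ext (f := d R ∘ₗ sg R) (g := - sg R ∘ₗ d R) (fun L => ?_) x
  simp only [LinearMap.comp_apply, LinearMap.neg_apply, sg_single, d_single, one_smul, map_smul]
  cases L with
  | nil => simp
  | cons B L =>
    rw [sg_len (m := L.length) (y := dw R (B :: L))]
    · rw [List.length_cons, pow_succ, mul_neg_one, neg_smul]
    · intro F hF
      have := Mg_of_dw (R := R) (G := B :: L) (F := F) (Finsupp.mem_support_iff.1 hF)
      have := this.len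
      simp only [List.length_cons, Nat.add_right_cancel_iff] at this
      exact this.symm

lemma sg_sg (x : W R α) : sg R (sg R x) = x := by
  refine W_ext (f := sg R ∘ₗ sg R) (g := LinearMap.id) (fun L => ?_) x
  simp [← mul_pow]

lemma sg_u {S : Finset α} {k} {x : W R α} (hx : x ∈ D R S k) (E : Finset α) :
    sg R (u R E x) = (-1 : R) ^ (max k 1) • u R E x := by
  refine eq_on_D (f := sg R ∘ₗ u R E) (g := (-1 : R) ^ (max k 1) • u R E) (fun L hL => ?_) hx
  simp [att_len, hL.2.2]

lemma dw_att (E : Finset α) (L : List (Finset α)) : dw R (att E L) = u R E (dw R L) := by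
  match L with
  | [] => simp [att, dw_cons]
  | [B] => simp [att, dw_cons]
  | [B, C] => simp [att, dw_cons, Finset.union_assoc]
  | B :: C :: C' :: L =>
    have ih := dw_att E (C :: C' :: L)
    have h : ∀ y ∈ Finsupp.supported R R {F : List (Finset α) | F ≠ []},
        u R E (cons R B y) = cons R B (u R E y) := by
      intro y hy
      have h2 : (u R E ∘ₗ cons R B - cons R B ∘ₗ u R E) y ∈ (⊥ : Submodule R (W R α)) := by
        refine map_mem_supported (fun F hF => ?_) hy
        obtain ⟨G, F, rfl⟩ := List.exists_cons_of_ne_nil hF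
        simp [att]
      simpa [sub_eq_zero] using h2
    rw [att, dw_cons, dw_cons, map_sub, h, ← ih]
    · simp [att]
    · intro F hF
      have := (Mg_of_dw (R := R) (G := C :: C' :: L) (F := F) (Finsupp.mem_support_iff.1 hF)).len
      rintro rfl
      simp at this
termination_by L.length

lemma d_u (E : Finset α) (x : W R α) : d R (u R E x) = u R E (d R x) := by
  refine W_ext (f := d R ∘ₗ u R E) (g := u R E ∘ₗ d R) (fun L => ?_) x
  simp only [LinearMap.comp_apply, u_single, d_single, one_smul]
  exact dw_att E L
end att
end ER

set_option linter.unusedSectionVars false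
namespace ER
open Finsupp
section step
variable {α : Type} [LinearOrder α] {R : Type} [CommRing R]

/-- words whose part after the block of `M` uses fewer than `t` letters -/
def P (M : α) (S : Finset α) (k t : ℕ) (b : Prop) : Set (List (Finset α)) :=
  {L | ∃ X Y S1 S2 k1 k2, L = att {M} X ++ Y ∧ X ∈ Val S1 k1 ∧ Y ∈ Val S2 k2 ∧ Disjoint S1 S2 ∧
    S1 ∪ S2 = S ∧ max k1 1 + k2 = k ∧ S2.card < t ∧ (S1 = ∅ → b)}

lemma P_mono {M : α} {S : Finset α} {k t t' : ℕ} {b b' : Prop} (h : t ≤ t') (hb : b → b') :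
    P M S k t b ⊆ P M S k t' b' := by
  rintro L ⟨X, Y, S1, S2, k1, k2, h1, h2, h3, h4, h5, h6, h7, h8⟩
  exact ⟨X, Y, S1, S2, k1, k2, h1, h2, h3, h4, h5, h6, by omega, fun h => hb (h8 h)⟩

lemma P_sub_Val {M : α} {S : Finset α} {k t : ℕ} {b : Prop} (hM : ∀ a ∈ S, a < M) :
    P M S k t b ⊆ Val (insert M S) k := by
  rintro L ⟨X, Y, S1, S2, k1, k2, rfl, h2, h3, h4, rfl, rfl, h7, h8⟩
  obtain ⟨h2, rfl, rfl⟩ := h2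
  obtain ⟨h3, rfl, rfl⟩ := h3
  refine ⟨OK_top h2 h3 h4 (fun h => ?_) (fun a ha => hM a (by simp [ha])), ?_, ?_⟩
  · exact (hM M (by simp [h])).false
  · rw [gs_append, att_gs, Finset.union_right_comm, Finset.union_comm _ {M}]; rfl
  · simp [att_len]

lemma Val_sub_P {M : α} {S : Finset α} {k : ℕ} (hM : ∀ a ∈ S, a < M) :
    Val (insert M S) k ⊆ P M S k (S.card + 1) True := by
  rintro L ⟨h1, h2, rfl⟩
  have hMS : M ∉ S := fun h => (hM M h).false
  obtain ⟨X, Y, rfl, h3, h4, h5, h6, h7⟩ := decomp (M := M) h1 (by simp [h2]) (fun a ha => by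
    rw [h2, Finset.mem_insert] at ha
    rcases ha with rfl | ha
    exacts [le_rfl, (hM a ha).le])
  have h8 : gs X ∪ gs Y = S := by
    rw [gs_append, att_gs] at h2
    have := congrArg (fun T => Finset.erase T M) h2
    simp only [Finset.erase_insert hMS] at this
    rw [← this]
    ext a
    simp only [Finset.mem_erase, Finset.mem_union, Finset.mem_singleton]
    by_cases ha : a = M
    · subst ha; simp [h5, h6]
    · simp [ha]
  refine ⟨X, Y, gs X, gs Y, _, _, rfl, ⟨h3, rfl, rfl⟩, ⟨h4, rfl, rfl⟩, h7, h8, ?_, ?_, fun _ => trivial⟩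
  · simp [att_len]
  · rw [← h8, Nat.lt_succ_iff]; exact Finset.card_le_card Finset.subset_union_right

lemma cat_mem {M : α} {S1 S2 S : Finset α} {k1 k2 k t : ℕ} {b : Prop} {x y : W R α}
    (hx : x ∈ D R S1 k1) (hy : y ∈ D R S2 k2) (hd : Disjoint S1 S2) (hS : S1 ∪ S2 = S)
    (hk : max k1 1 + k2 = k) (ht : S2.card < t) (hb : S1 = ∅ → b) :
    cat R (u R {M} x) y ∈ Finsupp.supported R R (P M S k t b) := by
  refine map_mem_D (f := (cat R).flip y ∘ₗ u R {M}) (fun X hX => ?_) hx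
  refine map_mem_D (f := cat R (u R {M} (single X 1))) (fun Y hY => ?_) hy
  simp only [u_single, cat_single]
  exact Finsupp.single_mem_supported R _ ⟨X, Y, S1, S2, k1, k2, rfl, hX, hY, hd, hS, hk, ht, hb⟩

lemma jw_nil (L : List (Finset α)) : jw R L (single [] 1) = 0 := by
  match L with
  | [] => simp [jw]
  | [B] => simp [jw]
  | B :: C :: L => simp [jw, jw_nil (C :: L)]

lemma jw_att (E : Finset α) (X : List (Finset α)) (C : Finset α) (Y : List (Finset α)) :
    jw R (att E X) (single (C :: Y) 1) =
      (-1 : R) ^ (X.length - 1) • single (att (E ∪ C) X ++ Y) 1 := by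
  match X with
  | [] => simp [att, jw]
  | [B] => simp [att, jw, Finset.union_assoc]
  | B :: C' :: L =>
    have h := jw_att E (C' :: L) C Y
    obtain ⟨E', L', h'⟩ := List.exists_cons_of_ne_nil (att_ne_nil E (C' :: L))
    rw [att, h', jw, ← h', LinearMap.neg_apply, LinearMap.comp_apply, h, map_smul, att]
    simp [pow_succ]

lemma Val_att {E S : Finset α} (hE : E.Nonempty) {k} {X : List (Finset α)} (hX : X ∈ Val S k)
    (hd : Disjoint S E) : att E X ∈ Val (S ∪ E) (max k 1) := by
  obtain ⟨h, rfl, rfl⟩ := hX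
  exact ⟨OK_att hE h hd, att_gs _ _, att_len _ _⟩

/-- the junction of two words, split -/
lemma jn_word (M : α) {S1 S2 : Finset α} {k1 k2 : ℕ} {X Y : List (Finset α)}
    (hX : X ∈ Val S1 k1) (hY : Y ∈ Val S2 k2) (hd : Disjoint S1 S2) :
    jn R (u R {M} (single X 1)) (single Y 1) = 0 ∨ ∃ (X' Y' : List (Finset α)) (S1' S2' : Finset α)
      (k2' : ℕ) (ε : R), X' ∈ Val S1' (max k1 1) ∧ Y' ∈ Val S2' k2' ∧ Disjoint S1' S2' ∧
      S1' ∪ S2' = S1 ∪ S2 ∧ k2 = k2' + 1 ∧ S2'.card < S2.card ∧ S1' ≠ ∅ ∧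
      jn R (u R {M} (single X 1)) (single Y 1) = ε • cat R (u R {M} (single X' 1)) (single Y' 1) := by
  simp only [u_single, jn_single, one_smul]
  cases Y with
  | nil => left; exact jw_nil _
  | cons C Y =>
    right
    obtain ⟨⟨h1, h2, h3, h4⟩, rfl, rfl⟩ := hY
    simp only [gs, Finset.disjoint_union_right] at hd
    have hε := jw_att (R := R) {M} X C Y
    refine ⟨att C X, Y, S1 ∪ C, gs Y, Y.length, (-1) ^ (X.length - 1), Val_att h1 hX hd.1, ⟨h4, rfl, rfl⟩, ?_, ?_, ?_,
      ?_, ?_, ?_⟩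
    · rw [Finset.disjoint_union_left]; exact ⟨hd.2, h2⟩
    · simp [gs, Finset.union_assoc]
    · simp
    · rw [gs, Finset.card_union_of_disjoint h2]
      have := Finset.card_pos.2 h1
      omega
    · intro h; simp only [Finset.union_eq_empty] at h; simp [h.2] at h1
    · rw [hε]; congr 1; simp [att_att, Finset.union_comm]

lemma jn_mem (M : α) {S1 S2 S : Finset α} {k1 k2 k : ℕ} {x y : W R α}
    (hx : x ∈ D R S1 k1) (hy : y ∈ D R S2 k2) (hd : Disjoint S1 S2) (hS : S1 ∪ S2 = S)
    (hk : max k1 1 + k2 = k + 1) :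
    jn R (u R {M} x) y ∈ Finsupp.supported R R (P M S k S2.card False) := by
  refine map_mem_D (f := (jn R).flip y ∘ₗ u R {M}) (fun X hX => ?_) hx
  refine map_mem_D (f := jn R (u R {M} (single X 1))) (fun Y hY => ?_) hy
  rcases jn_word (R := R) M hX hY hd with h | ⟨X', Y', S1', S2', k2', ε, h1, h2, h3, h4, h5, h6, h7, h8⟩
  · rw [h]; exact Submodule.zero_mem _
  · rw [h8]
    refine Submodule.smul_mem _ _ (cat_mem (single_mem_D h1 1) (single_mem_D h2 1) h3 (h4.trans hS)
      ?_ h6 h7)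
    omega

variable (h : W R α →ₗ[R] W R α)

noncomputable def pi : W R α →ₗ[R] W R α := LinearMap.id - d R ∘ₗ h - h ∘ₗ d R

lemma pi_apply (x : W R α) : pi h x = x - d R (h x) - h (d R x) := rfl

lemma pi_mem (hh : ∀ S k, ∀ x ∈ D R S k, h x ∈ D R S (k + 1)) {S k x} (hx : x ∈ D R S k) :
    pi h x ∈ D R S k := by
  rw [pi_apply]
  refine Submodule.sub_mem _ (Submodule.sub_mem _ hx (d_mem (hh _ _ _ hx))) ?_
  cases k with
  | zero => rw [d_zero hx, map_zero]; exact Submodule.zero_mem _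
  | succ k => exact hh _ _ _ (d_mem hx)

lemma d_pi (x : W R α) : d R (pi h x) = pi h (d R x) := by
  simp [pi_apply, d_d]

noncomputable def H0 (M : α) : W R α →ₗ[R] W R α := Finsupp.linearCombination R fun L =>
  cat R (u R {M} (h (single (pr M L).1 1))) (single (pr M L).2 1) +
  cat R (sg R (u R {M} (pi h (single (pr M L).1 1)))) (h (single (pr M L).2 1))

lemma H0_word {M : α} {X Y : List (Finset α)} (hX : OK X) (hM : M ∉ gs X) :
    H0 h M (single (att {M} X ++ Y) 1) =
    cat R (u R {M} (h (single X 1))) (single Y 1) +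
    cat R (sg R (u R {M} (pi h (single X 1)))) (h (single Y 1)) := by
  simp [H0, pr_att hX hM]

lemma H0_cat {M : α} {S1 S2 : Finset α} {k1 k2 : ℕ} {x y : W R α}
    (hx : x ∈ D R S1 k1) (hy : y ∈ D R S2 k2) (hM : M ∉ S1) :
    H0 h M (cat R (u R {M} x) y) =
    cat R (u R {M} (h x)) y + cat R (sg R (u R {M} (pi h x))) (h y) := by
  refine eq_on_D (f := H0 h M ∘ₗ (cat R).flip y ∘ₗ u R {M})
    (g := (cat R).flip y ∘ₗ u R {M} ∘ₗ h + (cat R).flip (h y) ∘ₗ sg R ∘ₗ u R {M} ∘ₗ pi h)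
    (fun X hX => ?_) hx
  refine eq_on_D (f := H0 h M ∘ₗ cat R (u R {M} (single X 1)))
    (g := cat R (u R {M} (h (single X 1))) +
     cat R (sg R (u R {M} (pi h (single X 1)))) ∘ₗ h)
    (fun Y hY => ?_) hy
  simp only [LinearMap.comp_apply, LinearMap.add_apply, u_single, cat_single, mul_one]
  exact H0_word h hX.1 (hX.2.1 ▸ hM)

lemma h_nil (hh : ∀ S k, ∀ x ∈ D R S k, h x ∈ D R S (k + 1)) {S} {x} (hx : x ∈ D R S 0) :
    h x = 0 := by
  have h1 := hh _ _ _ hx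
  refine (D_eq_zero (fun L hL => ?_) (hh ∅ 0 x ?_))
  · have := (Val_empty hL).2; omega
  · rw [mem_D_iff] at hx ⊢
    intro L hL
    have h1 := hx L hL
    have h2 := (Val_zero h1).2
    subst h2; exact h1

lemma H0_mem (hh : ∀ S k, ∀ x ∈ D R S k, h x ∈ D R S (k + 1)) {M : α} {S1 S2 S : Finset α}
    {k1 k2 k t : ℕ} {b : Prop}
    {x y : W R α} (hx : x ∈ D R S1 k1) (hy : y ∈ D R S2 k2) (hd : Disjoint S1 S2) (hS : S1 ∪ S2 = S)
    (hM : ∀ a ∈ S, a < M) (hk : max k1 1 + k2 + 1 = k) (ht : S2.card < t) (hb : S1 = ∅ → b) :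
    H0 h M (cat R (u R {M} x) y) ∈ Finsupp.supported R R (P M S k t b) := by
  rw [H0_cat h hx hy (fun h => (hM M (by simp [← hS, h])).false)]
  refine Submodule.add_mem _ ?_ ?_
  · cases k1 with
    | zero => rw [h_nil h hh hx]; simp
    | succ k1 => exact cat_mem (hh _ _ _ hx) hy hd hS (by omega) ht hb
  · rw [sg_u (pi_mem h hh hx), map_smul, LinearMap.smul_apply]
    exact Submodule.smul_mem _ _ (cat_mem (pi_mem h hh hx) (hh _ _ _ hy) hd hS (by omega) ht hb)

lemma step (hh : ∀ S k, ∀ x ∈ D R S k, h x ∈ D R S (k + 1)) {M : α} {S1 S2 S : Finset α}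
    {k1 k2 k : ℕ}
    {X Y : List (Finset α)} (hX : X ∈ Val S1 k1) (hY : Y ∈ Val S2 k2) (hd : Disjoint S1 S2)
    (hS : S1 ∪ S2 = S)
    (hM : ∀ a ∈ S, a < M) (hk : max k1 1 + k2 = k) :
    pi (H0 h M) (single (att {M} X ++ Y) 1) -
      cat R (u R {M} (pi h (single X 1))) (pi h (single Y 1)) ∈
      Finsupp.supported R R (P M S k S2.card False) := by
  have hMS1 : M ∉ S1 := fun h => (hM M (by simp [← hS, h])).false
  set x : W R α := single X 1 with hx
  set y : W R α := single Y 1 with hy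
  have hxD : x ∈ D R S1 k1 := single_mem_D hX 1
  have hyD : y ∈ D R S2 k2 := single_mem_D hY 1
  have e0 : (single (att {M} X ++ Y) 1 : W R α) = cat R (u R {M} x) y := by simp [hx, hy]
  have e1 : sg R (u R {M} (h x)) = - (-1 : R) ^ max k1 1 • u R {M} (h x) := by
    cases k1 with
    | zero => rw [h_nil h hh hxD]; simp
    | succ k1 =>
      rw [sg_u (hh _ _ _ hxD)]
      congr 1
      rw [max_eq_left (by omega), max_eq_left (by omega), pow_succ]; ring
  have e2 : sg R (u R {M} x) = (-1 : R) ^ max k1 1 • u R {M} x := sg_u hxD _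
  have e3 : u R {M} (pi h x) = (-1 : R) ^ max k1 1 • sg R (u R {M} (pi h x)) := by
    rw [sg_u (pi_mem h hh hxD), smul_smul, ← mul_pow]; simp
  have e4 : H0 h M (cat R (u R {M} (d R x)) y) =
    cat R (u R {M} (h (d R x))) y + cat R (sg R (u R {M} (pi h (d R x)))) (h y) := by
    cases k1 with
    | zero => rw [d_zero hxD]; simp
    | succ k1 => exact H0_cat h (d_mem hxD) hyD hMS1
  have e5 : H0 h M (cat R (u R {M} x) (d R y)) =
    cat R (u R {M} (h x)) (d R y) + cat R (sg R (u R {M} (pi h x))) (h (d R y)) := by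
    cases k2 with
    | zero => rw [d_zero hyD]; simp
    | succ k2 => exact H0_cat h hxD (d_mem hyD) hMS1
  have e6 : pi (H0 h M) (single (att {M} X ++ Y) 1) -
      cat R (u R {M} (pi h x)) (pi h y) =
      - (H0 h M (jn R (u R {M} x) y) + jn R (u R {M} (h x)) y
        + jn R (sg R (u R {M} (pi h x))) (h y)) := by
    rw [e0, pi_apply (H0 h M), H0_cat h hxD hyD hMS1, d_cat, map_add (d R), d_cat, d_cat, d_u, d_sg,
      d_u, d_pi, map_add, map_add, d_u, e4, e2, e1, sg_sg, LinearMap.map_smul₂,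
      LinearMap.map_smul₂, map_smul, e5, smul_add]
    have e7 : cat R (u R {M} x) y = cat R (u R {M} (pi h x)) y
      + cat R (u R {M} (d R (h x))) y + cat R (u R {M} (h (d R x))) y := by
      rw [← LinearMap.add_apply, ← map_add, ← map_add, ← LinearMap.add_apply, ← map_add, ← map_add]
      congr 3
      rw [pi_apply]; abel
    have e8 : cat R (u R {M} (pi h x)) y = cat R (u R {M} (pi h x)) (pi h y)
      + cat R (u R {M} (pi h x)) (d R (h y)) + cat R (u R {M} (pi h x)) (h (d R y)) := by
      rw [← map_add, ← map_add]
      congr 1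
      rw [pi_apply]; abel
    have e9 : cat R (u R {M} (pi h x)) (h (d R y)) =
      (-1 : R) ^ max k1 1 • cat R (sg R (u R {M} (pi h x))) (h (d R y)) := by
      conv_lhs => rw [e3]
      rw [LinearMap.map_smul₂]
    rw [e7, e8, e9]
    simp only [map_neg, LinearMap.neg_apply, neg_smul]
    abel
  rw [e6]
  refine Submodule.neg_mem _ (Submodule.add_mem _ (Submodule.add_mem _ ?_ ?_) ?_)
  · rcases jn_word (R := R) M hX hY hd with
      h0 | ⟨X', Y', S1', S2', k2', ε, h1, h2, h3, h4, h5, h6, h7, h8⟩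
    · rw [h0]; simp
    · rw [h8, map_smul]
      exact Submodule.smul_mem _ _ (H0_mem h hh (single_mem_D h1 1) (single_mem_D h2 1) h3
        (h4.trans hS) hM (by omega) h6 h7)
  · cases k1 with
    | zero => rw [h_nil h hh hxD]; simp
    | succ k1 => exact jn_mem M (hh _ _ _ hxD) hyD hd hS (by omega)
  · rw [sg_u (pi_mem h hh hxD), map_smul, LinearMap.smul_apply]
    exact Submodule.smul_mem _ _ (jn_mem M (pi_mem h hh hxD) (hh _ _ _ hyD) hd hS (by omega))

end step
end ER

set_option linter.unusedSectionVars false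
namespace ER
open Finsupp
section vanish
variable {α : Type} [LinearOrder α] {F : Type} [Field F]

/-- remove the head block `E` -/
noncomputable def hw (F : Type) [CommRing F] (E : Finset α) : List (Finset α) → W F α
  | [] => 0
  | B :: L => if B = E then single L 1 else 0
variable (F) in
noncomputable def hd (E : Finset α) : W F α →ₗ[F] W F α := Finsupp.linearCombination F (hw F E)

@[simp] lemma hd_single (E : Finset α) (L : List (Finset α)) : hd F E (single L 1) = hw F E L := by
  simp [hd]
lemma hd_cons_self (E : Finset α) (x : W F α) : hd F E (cons F E x) = x := by
  refine W_ext (f := hd F E ∘ₗ cons F E) (g := LinearMap.id) (fun L => ?_) x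
  simp [hw]
lemma hd_cons_ne {E B : Finset α} (h : B ≠ E) (x : W F α) : hd F E (cons F B x) = 0 := by
  refine W_ext (f := hd F E ∘ₗ cons F B) (g := 0) (fun L => ?_) x
  simp [hw, h]
lemma hd_apply (E : Finset α) (x : W F α) (Y : List (Finset α)) : hd F E x Y = x (E :: Y) := by
  refine W_ext (f := Finsupp.lapply Y ∘ₗ hd F E) (g := Finsupp.lapply (E :: Y)) (fun L => ?_) x
  cases L with
  | nil => simp [hw]
  | cons B L =>
    by_cases h : B = E
    · subst h; simp [hw, Finsupp.single_apply]
    · simp [hw, h]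

lemma hd_mem {E S : Finset α} {k : ℕ} {x : W F α} (hx : x ∈ D F S (k + 1)) :
    hd F E x ∈ D F (S \ E) k := by
  refine map_mem_D (fun L hL => ?_) hx
  cases L with
  | nil => simp [hw]
  | cons B L =>
    simp only [hd_single, hw]
    split_ifs with h
    · subst h
      obtain ⟨⟨h1, h2, h3, h4⟩, rfl, h5⟩ := hL
      refine single_mem_D ⟨h4, ?_, by simpa using h5⟩ 1
      rw [gs, Finset.union_sdiff_left, Finset.sdiff_eq_self_of_disjoint h2.symm]
    · exact Submodule.zero_mem _

lemma hd_d {M : α} {S : Finset α} {k : ℕ} {x : W F α} (hx : x ∈ D F S k) :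
    hd F {M} (d F x) = - d F (hd F {M} x) := by
  refine eq_on_D (f := hd F {M} ∘ₗ d F) (g := - d F ∘ₗ hd F {M}) (fun L hL => ?_) hx
  simp only [LinearMap.comp_apply, LinearMap.neg_apply, d_single, hd_single, one_smul]
  cases L with
  | nil => simp [hw]
  | cons B L =>
    obtain ⟨⟨h1, h2, h3, h4⟩, -, -⟩ := hL
    have h0 : hd F {M} (mw F B L) = 0 := by
      cases L with
      | nil => simp
      | cons C L =>
        have : B ∪ C ≠ {M} := by
          intro h
          obtain ⟨b, hb⟩ := h1
          obtain ⟨c, hc⟩ := h4.1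
          have e1 : b ∈ ({M} : Finset α) := h ▸ Finset.mem_union_left _ hb
          have e2 : c ∈ ({M} : Finset α) := h ▸ Finset.mem_union_right _ hc
          simp only [Finset.mem_singleton] at e1 e2
          subst e1; subst e2
          exact Finset.disjoint_left.1 h2 hb (by simp [gs, hc])
        simp [hw, this]
    rw [dw_cons, map_sub, h0]
    by_cases h : B = {M}
    · subst h; simp [hd_cons_self, hw]
    · simp [hd_cons_ne h, hw, h]

lemma hd_hd {M M' : α} (hMM : M' < M) {S : Finset α} {k : ℕ} {x : W F α} (hx : x ∈ D F S k) :
    hd F {M'} (hd F {M} x) = d F (hd F {M, M'} x) + hd F {M, M'} (d F x) := by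
  refine eq_on_D (f := hd F {M'} ∘ₗ hd F {M}) (g := d F ∘ₗ hd F {M, M'} + hd F {M, M'} ∘ₗ d F)
    (fun L hL => ?_) hx
  simp only [LinearMap.comp_apply, LinearMap.add_apply, d_single, hd_single, one_smul]
  have hne : ({M} : Finset α) ≠ {M, M'} := by
    intro h
    have : M' ∈ ({M} : Finset α) := by rw [h]; simp
    simp at this; exact hMM.ne this
  cases L with
  | nil => simp [hw]
  | cons B L =>
    obtain ⟨⟨h1, h2, h3, h4⟩, -, -⟩ := hL
    rw [dw_cons, map_sub]
    by_cases hB : B = {M}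
    · subst hB
      rw [hd_cons_ne hne]
      cases L with
      | nil => simp [hw, hne]
      | cons C L =>
        by_cases hC : C = {M'}
        · subst hC
          have : ({M} : Finset α) ∪ {M'} = {M, M'} := rfl
          simp [hw, hne, this]
        · have : ({M} : Finset α) ∪ C ≠ {M, M'} := by
            intro h
            apply hC
            have hMC : M ∉ C := fun h => Finset.disjoint_left.1 h2 (Finset.mem_singleton_self M) (by simp [gs, h])
            ext a
            have := Finset.ext_iff.1 h a
            simp only [Finset.mem_union, Finset.mem_singleton, Finset.mem_insert] at this ⊢
            by_cases ha : a = M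
            · subst ha; simp [hMC, hMM.ne']
            · simpa [ha] using this
          simp only [hw, hne, hC, this, mw_cons, hd_single, if_true, if_false]
          simp
    · have e1 : hw F {M} (B :: L) = 0 := by simp [hw, hB]
      rw [e1, map_zero]
      have e2 : hd F {M, M'} (mw F B L) = 0 := by
        cases L with
        | nil => simp
        | cons C L =>
          have : B ∪ C ≠ {M, M'} := by
            intro h
            obtain ⟨a, ha, c, hc, hac⟩ : lk B C := h3
            have e1 : a ∈ ({M, M'} : Finset α) := h ▸ Finset.mem_union_left _ ha
            have e2 : c ∈ ({M, M'} : Finset α) := h ▸ Finset.mem_union_right _ hc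
            simp only [Finset.mem_insert, Finset.mem_singleton] at e1 e2
            have haM : a = M ∧ c = M' := by
              rcases e1 with rfl | rfl <;> rcases e2 with rfl | rfl
              · exact absurd hac (lt_irrefl _)
              · exact ⟨rfl, rfl⟩
              · exact absurd hac (lt_asymm hMM)
              · exact absurd hac (lt_irrefl _)
            obtain ⟨rfl, rfl⟩ := haM
            apply hB
            ext b
            simp only [Finset.mem_singleton]
            refine ⟨fun hb => ?_, fun hb => hb ▸ ha⟩
            have e1 : b ∈ ({a, c} : Finset α) := h ▸ Finset.mem_union_left _ hb
            simp only [Finset.mem_insert, Finset.mem_singleton] at e1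
            rcases e1 with rfl | rfl
            · rfl
            · exact absurd (by simp [gs, hc]) (Finset.disjoint_left.1 h2 hb)
          simp [hw, this]
      rw [e2]
      by_cases h : B = {M, M'}
      · subst h; simp [hd_cons_self, hw]
      · simp [hd_cons_ne h, hw, h]

def Good (n k : ℕ) : Prop := (1 ≤ n ∧ 3 * k ≤ n + 1) ∨ 2 * n + 2 ≤ 3 * k

lemma pi_zero {h : W F α →ₗ[F] W F α}
    (hh' : ∀ S k, Ex F S k → ∀ x ∈ D F S k, d F (h x) + h (d F x) = x) {S k} (hE : Ex F S k)
    {x} (hx : x ∈ D F S k) : pi h x = 0 := by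
  rw [pi_apply, sub_sub, hh' S k hE x hx, sub_self]

lemma supp_mono {A A' : Set (List (Finset α))} (h : A ⊆ A') {x : W F α}
    (hx : x ∈ Finsupp.supported F F A) : x ∈ Finsupp.supported F F A' :=
  Finsupp.supported_mono h hx

lemma H0_mem_D {h : W F α →ₗ[F] W F α} (hh : ∀ S k, ∀ x ∈ D F S k, h x ∈ D F S (k + 1))
    {M : α} {S : Finset α} (hM : ∀ a ∈ S, a < M) {k : ℕ} {c : W F α}
    (hc : c ∈ D F (insert M S) k) : H0 h M c ∈ D F (insert M S) (k + 1) := by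
  refine map_mem_D (fun L hL => ?_) hc
  obtain ⟨X, Y, S1, S2, k1, k2, rfl, h1, h2, h3, h4, h5, h6, -⟩ := Val_sub_P hM hL
  refine supp_mono (P_sub_Val (t := S.card + 1) (b := True) hM) ?_
  have := H0_mem h hh (single_mem_D h1 1) (single_mem_D h2 1) h3 h4 hM
    (by rw [h5]) h6 (b := True) (fun _ => trivial)
  simpa using this

lemma lem_A {h : W F α →ₗ[F] W F α} (hh : ∀ S k, ∀ x ∈ D F S k, h x ∈ D F S (k + 1))
    (hh' : ∀ S k, Ex F S k → ∀ x ∈ D F S k, d F (h x) + h (d F x) = x)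
    {M : α} {S : Finset α} (hM : ∀ a ∈ S, a < M)
    (IH : ∀ S1 : Finset α, S1.card ≤ S.card → ∀ k, Good S1.card k → Ex F S1 k)
    {k : ℕ} (hk : 3 * k ≤ S.card + 3) (t : ℕ) {c : W F α}
    (hc : c ∈ Finsupp.supported F F (P M S k (t + 1) True)) (hdc : d F c = 0) :
    ∃ e ∈ D F (insert M S) (k + 1), c - d F e ∈ Finsupp.supported F F (P M S k 1 True) := by
  induction t generalizing c with
  | zero => exact ⟨0, Submodule.zero_mem _, by simpa using hc⟩
  | succ t ih =>
    have e1 : pi (H0 h M) c = c - d F (H0 h M c) := by rw [pi_apply, hdc]; simp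
    have e2 : pi (H0 h M) c ∈ Finsupp.supported F F (P M S k (t + 1) True) := by
      refine map_mem_supported (fun L hL => ?_) hc
      obtain ⟨X, Y, S1, S2, k1, k2, rfl, h1, h2, h3, h4, h5, h6, -⟩ := hL
      have h7 := step h hh h1 h2 h3 h4 hM h5
      rw [← sub_add_cancel (pi (H0 h M) _)
        (cat F (u F {M} (pi h (single X 1))) (pi h (single Y 1)))]
      refine Submodule.add_mem _ (supp_mono (P_mono (by omega) (fun _ => trivial)) h7) ?_
      rcases S2.eq_empty_or_nonempty with rfl | hne
      · exact cat_mem (pi_mem h hh (single_mem_D h1 1)) (pi_mem h hh (single_mem_D h2 1)) h3 h4 h5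
          (by simp) (fun _ => trivial)
      · have hpos := hne.card_pos
        have hcard : S1.card + S2.card = S.card := by
          rw [← h4, Finset.card_union_of_disjoint h3]
        by_cases hg : 3 * k2 ≤ S2.card + 1
        · rw [pi_zero hh' (IH S2 (by omega) k2 (Or.inl ⟨hpos, hg⟩)) (single_mem_D h2 1)]
          simp
        · rw [pi_zero hh' (IH S1 (by omega) k1 (Or.inl (by omega))) (single_mem_D h1 1)]
          simp
    obtain ⟨e, he, hce⟩ := ih (c := pi (H0 h M) c) e2 (by rw [e1, map_sub, d_d, hdc, sub_zero])
    refine ⟨H0 h M c + e, Submodule.add_mem _ (H0_mem_D hh hM ?_) he, ?_⟩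
    · exact supp_mono (P_sub_Val hM) hc
    · rw [map_add, ← sub_sub, ← e1]; exact hce

lemma u_inj {M : α} {S : Finset α} (hM : M ∉ S) {k : ℕ} {x : W F α} (hx : x ∈ D F S k)
    (h : u F {M} x = 0) : x = 0 := by
  have : (Finsupp.lmapDomain F F (fun L => (pr M L).1) ∘ₗ u F {M}) x = (LinearMap.id : W F α →ₗ[F] W F α) x := by
    refine eq_on_D (fun L hL => ?_) hx
    have := pr_att hL.1 (M := M) (hL.2.1 ▸ hM) []
    rw [List.append_nil] at this
    simp [this]
  rw [LinearMap.comp_apply, h, map_zero] at this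
  exact this.symm

lemma lem_A2 {M : α} {S : Finset α} (hM : ∀ a ∈ S, a < M)
    {k : ℕ} {c : W F α}
    (hc : c ∈ Finsupp.supported F F (P M S k 1 True)) (hdc : d F c = 0) :
    ∃ k' c', c' ∈ D F S k' ∧ d F c' = 0 ∧ c = u F {M} c' ∧ (c ≠ 0 → max k' 1 = k) ∧
      (S.Nonempty → k' = k) := by
  have hMS : M ∉ S := fun h => (hM M h).false
  let k' := if S = ∅ then 0 else k
  have hc2 : c ∈ Submodule.map (u F {M}) (D F S k') := by
    rw [Finsupp.supported_eq_span_single] at hc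
    refine Submodule.span_le.2 ?_ hc
    rintro _ ⟨L, ⟨X, Y, S1, S2, k1, k2, rfl, h1, h2, h3, h4, h5, h6, -⟩, rfl⟩
    have hS2 : S2 = ∅ := by simpa using h6
    subst hS2
    obtain ⟨rfl, rfl⟩ := Val_empty h2
    rw [Finset.union_empty] at h4
    subst h4
    refine ⟨single X 1, single_mem_D ?_ 1, by simp⟩
    convert h1
    by_cases hS : S1 = ∅
    · subst hS; simp [k', (Val_empty h1).2]
    · simp only [k', hS, if_false]
      rcases Nat.eq_zero_or_pos k1 with h | h
      · subst h; exact absurd (Val_zero h1).2 hS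
      · omega
  obtain ⟨c', hc', rfl⟩ := hc2
  refine ⟨k', c', hc', ?_, rfl, ?_, ?_⟩
  · rcases hk : k' with _ | m
    · rw [hk] at hc'; exact d_zero hc'
    · rw [hk] at hc'
      exact u_inj hMS (d_mem hc') (by rw [← d_u, hdc])
  · intro hne
    obtain ⟨L, hL⟩ := Finsupp.support_nonempty_iff.2 hne
    obtain ⟨X, Y, S1, S2, k1, k2, rfl, h1, h2, h3, h4, h5, h6, -⟩ := hc hL
    have hS2 : S2 = ∅ := by simpa using h6
    subst hS2
    obtain ⟨rfl, rfl⟩ := Val_empty h2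
    rw [Finset.union_empty] at h4
    subst h4
    by_cases hS : S1 = ∅
    · subst hS; simp [k']; simp [(Val_empty h1).2] at h5; exact h5
    · simp only [k', hS, if_false]
      omega
  · intro hne; simp [k', hne.ne_empty]

lemma kappa {M M' : α} (hMM : M' < M) {S : Finset α} (hM' : ∀ a ∈ S, a < M') {k : ℕ} {c : W F α}
    (hc : c ∈ D F S k) (hdc : d F c = 0) :
    ∃ e ∈ D F (insert M (insert M' S)) (max k 1 + 1), d F e = u F {M} (u F {M'} c) := by
  have e1 : d F (cat F (u F {M} c) (single [{M'}] 1)) = (-1 : F) ^ (k - 1) • u F {M} (u F {M'} c) := by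
    rw [d_cat, d_u, hdc]
    simp only [map_zero, LinearMap.zero_apply, zero_add, d_single, dw_cons, mw_nil, dw_nil, sub_zero,
      smul_zero]
    refine eq_on_D (f := (jn F).flip (single [{M'}] 1) ∘ₗ u F {M})
      (g := (-1 : F) ^ (k - 1) • u F {M} ∘ₗ u F {M'}) (fun L hL => ?_) hc
    have := jw_att (R := F) {M} L {M'} []
    simp [this, hL.2.2, att_att, Finset.union_comm]
  refine ⟨(-1 : F) ^ (k - 1) • cat F (u F {M} c) (single [{M'}] 1), Submodule.smul_mem _ _ ?_, ?_⟩
  · refine supp_mono (P_sub_Val (t := 2) (b := True) ?_) (cat_mem hc (single_mem_D (S := {M'}) (k := 1) ?_ 1) ?_ ?_ rfl ?_ ?_)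
    · intro a ha
      rcases Finset.mem_insert.1 ha with rfl | ha
      · exact hMM
      · exact (hM' a ha).trans hMM
    · exact ⟨⟨by simp, by simp [gs], trivial, trivial⟩, by simp [gs], rfl⟩
    · simp only [Finset.disjoint_singleton_right]; exact fun h => (hM' _ h).false
    · rw [Finset.union_comm]; rfl
    · simp
    · exact fun _ => trivial
  · rw [map_smul, e1, smul_smul, ← mul_pow]; simp

lemma lem_B {h : W F α →ₗ[F] W F α} (hh : ∀ S k, ∀ x ∈ D F S k, h x ∈ D F S (k + 1))
    (hh' : ∀ S k, Ex F S k → ∀ x ∈ D F S k, d F (h x) + h (d F x) = x)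
    {M : α} {S : Finset α} (hM : ∀ a ∈ S, a < M)
    (IH : ∀ S1 : Finset α, S1.card ≤ S.card → ∀ k, Good S1.card k → Ex F S1 k)
    {k : ℕ} (hk : 2 * S.card + 3 ≤ 3 * k) (t : ℕ) {c : W F α}
    (hc : c ∈ Finsupp.supported F F (P M S k t False)) (hdc : d F c = 0) :
    ∃ e ∈ D F (insert M S) (k + 1), d F e = c := by
  induction t generalizing c with
  | zero =>
    refine ⟨0, Submodule.zero_mem _, ?_⟩
    rw [map_zero]
    symm
    by_contra hne
    obtain ⟨L, hL⟩ := Finsupp.support_nonempty_iff.2 hne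
    obtain ⟨X, Y, S1, S2, k1, k2, -, -, -, -, -, -, h6, -⟩ := hc hL
    omega
  | succ t ih =>
    have e1 : pi (H0 h M) c = c - d F (H0 h M c) := by rw [pi_apply, hdc]; simp
    have e2 : pi (H0 h M) c ∈ Finsupp.supported F F (P M S k t False) := by
      refine map_mem_supported (fun L hL => ?_) hc
      obtain ⟨X, Y, S1, S2, k1, k2, rfl, h1, h2, h3, h4, h5, h6, h8⟩ := hL
      have h7 := step h hh h1 h2 h3 h4 hM h5
      rw [← sub_add_cancel (pi (H0 h M) _)
        (cat F (u F {M} (pi h (single X 1))) (pi h (single Y 1)))]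
      refine Submodule.add_mem _ (supp_mono (P_mono (by omega) id) h7) ?_
      have hk1 : 1 ≤ k1 := by
        rcases Nat.eq_zero_or_pos k1 with h | h
        · subst h; exact absurd (Val_zero h1).2 h8
        · exact h
      have hcard : S1.card + S2.card = S.card := by
        rw [← h4, Finset.card_union_of_disjoint h3]
      by_cases hg : 2 * S2.card + 2 ≤ 3 * k2
      · rw [pi_zero hh' (IH S2 (by omega) k2 (Or.inr hg)) (single_mem_D h2 1)]
        simp
      · rw [pi_zero hh' (IH S1 (by omega) k1 (Or.inr (by omega))) (single_mem_D h1 1)]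
        simp
    obtain ⟨e, he, hce⟩ := ih (c := pi (H0 h M) c) e2 (by rw [e1, map_sub, d_d, hdc, sub_zero])
    refine ⟨H0 h M c + e, Submodule.add_mem _ (H0_mem_D hh hM ?_) he, ?_⟩
    · exact supp_mono (P_sub_Val hM) hc
    · rw [map_add, hce, e1]; abel

lemma lem_B2 {h : W F α →ₗ[F] W F α} (hh : ∀ S k, ∀ x ∈ D F S k, h x ∈ D F S (k + 1))
    (hh' : ∀ S k, Ex F S k → ∀ x ∈ D F S k, d F (h x) + h (d F x) = x)
    {M : α} {S : Finset α} (hM : ∀ a ∈ S, a < M)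
    (IH : ∀ S1 : Finset α, S1.card ≤ S.card → ∀ k, Good S1.card k → Ex F S1 k)
    {k : ℕ} (hk : 2 * S.card + 3 ≤ 3 * k) {c e : W F α}
    (hc : c ∈ D F (insert M S) k) (hdc : d F c = 0) (he : e ∈ D F S k)
    (hce : hd F {M} c = d F e) :
    ∃ e ∈ D F (insert M S) (k + 1), d F e = c := by
  have h1 : cons F {M} e ∈ D F (insert M S) (k + 1) := by
    have e1 : cons F {M} e = cat F (u F {M} (single [] 1)) e := by
      have := cat_cons {M} (single [] (1 : F)) e
      rw [cat_nil] at this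
      simpa [att] using this.symm
    rw [e1]
    refine supp_mono (P_sub_Val (t := S.card + 1) (b := True) hM)
      (cat_mem (S1 := ∅) (k1 := 0) (single_mem_D (L := []) ⟨trivial, rfl, rfl⟩ 1) he ?_ ?_ ?_ ?_ ?_)
    · simp
    · simp
    · simp [add_comm]
    · simp
    · exact fun _ => trivial
  have h2 : c + d F (cons F {M} e) ∈ D F (insert M S) k := Submodule.add_mem _ hc (d_mem h1)
  have h3 : hd F {M} (c + d F (cons F {M} e)) = 0 := by
    rw [map_add, hd_d h1, hd_cons_self, hce]; simp
  have h4 : c + d F (cons F {M} e) ∈ Finsupp.supported F F (P M S k (S.card + 1) False) := by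
    intro L hL
    obtain ⟨X, Y, S1, S2, k1, k2, rfl, h1, h2, h3', h4, h5, h6, -⟩ := Val_sub_P hM (h2 hL)
    refine ⟨X, Y, S1, S2, k1, k2, rfl, h1, h2, h3', h4, h5, h6, ?_⟩
    rintro rfl
    obtain ⟨rfl, rfl⟩ := Val_empty h1
    have := hd_apply {M} (c + d F (cons F {M} e)) Y
    rw [h3] at this
    exact (Finsupp.mem_support_iff.1 hL) this.symm
  obtain ⟨e', he', hde⟩ := lem_B hh hh' hM IH hk _ h4 (by rw [map_add, hdc, d_d, add_zero])
  refine ⟨e' - cons F {M} e, Submodule.sub_mem _ he' h1, ?_⟩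
  rw [map_sub, hde]; abel

lemma exists_top {S : Finset α} (hS : S.Nonempty) : ∃ M S0, S = insert M S0 ∧ (∀ a ∈ S0, a < M) ∧
    S.card = S0.card + 1 := by
  refine ⟨S.max' hS, S.erase (S.max' hS), (Finset.insert_erase (S.max'_mem hS)).symm, fun a ha => ?_, ?_⟩
  · exact Finset.lt_max'_of_mem_erase_max' S hS ha
  · rw [Finset.card_erase_add_one (S.max'_mem hS)]

variable (F) in
theorem vanish (n : ℕ) : ∀ (S : Finset α), S.card = n → ∀ k, Good n k → Ex F S k := by
  obtain ⟨h, hh, hh'⟩ := exists_h (α := α) (F := F)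
  induction n using Nat.strong_induction_on with
  | _ n ih =>
  intro S hS k hg c hc hdc
  subst hS
  by_cases hc0 : c = 0
  · exact ⟨0, Submodule.zero_mem _, by simp [hc0]⟩
  obtain ⟨L0, hL0⟩ := Finsupp.support_nonempty_iff.2 hc0
  have hL0 := hc hL0
  rcases S.eq_empty_or_nonempty with rfl | hne
  · have := (Val_empty hL0).2
    subst this
    rcases hg with hg | hg <;> simp at hg
  obtain ⟨M, S0, rfl, hM, hcard⟩ := exists_top hne
  have IH : ∀ S1 : Finset α, S1.card ≤ S0.card → ∀ k, Good S1.card k → Ex F S1 k :=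
    fun S1 h1 k hk => ih S1.card (by omega) S1 rfl k hk
  have hkpos : 1 ≤ k := by
    rcases Nat.eq_zero_or_pos k with h | h
    · subst h; simp [(Val_zero hL0).2] at hne
    · exact h
  rcases hg with ⟨-, hg⟩ | hg
  · obtain ⟨e, he, hce⟩ := lem_A hh hh' hM IH (by omega) S0.card (supp_mono (Val_sub_P hM) hc) hdc
    obtain ⟨k', c', hc', hdc', hcc', -, hk'⟩ := lem_A2 hM hce (by rw [map_sub, d_d, hdc, sub_zero])
    have hne0 : S0.Nonempty := by rw [← Finset.card_pos]; omega
    obtain rfl := hk' hne0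
    obtain ⟨M', S00, rfl, hM', hcard'⟩ := exists_top hne0
    obtain ⟨e', he', hce'⟩ := lem_A hh hh' hM' (fun S1 h1 => IH S1 (by omega)) (by omega) S00.card
      (supp_mono (Val_sub_P hM') hc') hdc'
    obtain ⟨k'', c'', hc'', hdc'', hcc'', hk'', -⟩ :=
      lem_A2 hM' hce' (by rw [map_sub, d_d, hdc', sub_zero])
    have hue : u F {M} e' ∈ D F (insert M (insert M' S00)) (k' + 1) := by
      have := cat_mem (M := M) (t := (insert M' S00).card + 1) (b := True) he'
        (single_mem_D (S := ∅) (k := 0) (L := []) ⟨trivial, rfl, rfl⟩ 1) (by simp)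
        (Finset.union_empty _) (show max (k' + 1) 1 + 0 = k' + 1 by omega) (by simp) (fun _ => trivial)
      rw [cat_nil'] at this
      have := supp_mono (P_sub_Val hM) this
      exact this
    by_cases h0 : c' - d F e' = 0
    · refine ⟨e + u F {M} e', Submodule.add_mem _ he hue, ?_⟩
      rw [map_add, d_u, ← sub_eq_zero.1 h0, ← hcc']; abel
    · have hk2 := hk'' h0
      obtain ⟨g, hg, hdg⟩ := kappa (M := M) (hM M' (by simp)) hM' hc'' hdc''
      rw [hk2] at hg
      refine ⟨e + u F {M} e' + g, Submodule.add_mem _ (Submodule.add_mem _ he hue) hg, ?_⟩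
      rw [map_add, map_add, d_u, hdg, ← hcc'', map_sub, ← hcc']; abel
  · obtain ⟨k, rfl⟩ : ∃ k', k = k' + 1 := ⟨k - 1, by omega⟩
    have hMS0 : M ∉ S0 := fun h => (hM M h).false
    have hv : hd F {M} c ∈ D F S0 k := by
      have := hd_mem (E := {M}) hc
      rwa [Finset.sdiff_singleton_eq_erase, Finset.erase_insert hMS0] at this
    have hdv : d F (hd F {M} c) = 0 := by
      have := hd_d (M := M) hc
      rw [hdc, map_zero] at this
      exact neg_eq_zero.1 this.symm
    suffices hs : ∃ e ∈ D F S0 (k + 1), d F e = hd F {M} c by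
      obtain ⟨e, he, hde⟩ := hs
      exact lem_B2 hh hh' hM IH (by omega) hc hdc he hde.symm
    rcases S0.eq_empty_or_nonempty with rfl | hne0
    · refine ⟨0, Submodule.zero_mem _, ?_⟩
      rw [map_zero]
      refine (D_eq_zero (fun L hL => ?_) hv).symm
      have := (Val_empty hL).2
      rw [hcard, Finset.card_empty] at hg; omega
    · obtain ⟨M', S00, rfl, hM', hcard'⟩ := exists_top hne0
      have hMM : M' < M := hM M' (by simp)
      have hMS00 : M' ∉ S00 := fun h => (hM' M' h).false
      refine lem_B2 hh hh' hM' (fun S1 h1 => IH S1 (by omega)) (by omega) hv hdv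
        (e := hd F {M, M'} c) ?_ ?_
      · have := hd_mem (E := {M, M'}) hc
        convert this using 2
        ext a
        simp only [Finset.mem_sdiff, Finset.mem_insert, Finset.mem_singleton, not_or]
        constructor
        · intro ha
          exact ⟨Or.inr (Or.inr ha), (hM a (by simp [ha])).ne, (hM' a ha).ne⟩
        · tauto
      · rw [hd_hd hMM hc, hdc, map_zero, add_zero]

end vanish
end ER

set_option linter.unusedSectionVars false
namespace ER
open Finsupp
section nonvanish
variable {α : Type} [LinearOrder α] {R : Type} [CommRing R]

lemma exists_bot {S : Finset α} (hS : S.Nonempty) : ∃ M S0, S = insert M S0 ∧ (∀ a ∈ S0, M < a) ∧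
    S.card = S0.card + 1 := by
  refine ⟨S.min' hS, S.erase (S.min' hS), (Finset.insert_erase (S.min'_mem hS)).symm, fun a ha => ?_, ?_⟩
  · exact Finset.min'_lt_of_mem_erase_min' S hS ha
  · rw [Finset.card_erase_add_one (S.min'_mem hS)]

variable (R) in
def Nv (S : Finset α) (k : ℕ) : Prop :=
  ∃ z ∈ D R S k, d R z = 0 ∧ ∃ L, z L ≠ 0 ∧ ∀ G, OK G → ¬ Mg G L

lemma Nv.not_Ex {S : Finset α} {k : ℕ} (h : Nv R S k) : ¬ Ex R S k := by
  obtain ⟨z, hz, hdz, L, hL, hG⟩ := h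
  intro hE
  obtain ⟨e, he, rfl⟩ := hE z hz hdz
  apply hL
  refine eq_on_D (f := Finsupp.lapply L ∘ₗ d R) (g := 0) (fun G hGv => ?_) he
  by_contra h
  exact hG G hGv.1 (Mg_of_dw (R := R) (by simpa using h))

lemma cons_mem {B S : Finset α} {k : ℕ} {M : α} (hMB : M ∈ B) (hM : ∀ a ∈ S, a < M)
    (hd : Disjoint B S) {x : W R α} (hx : x ∈ D R S k) : cons R B x ∈ D R (B ∪ S) (k + 1) := by
  refine map_mem_D (fun L hL => ?_) hx
  obtain ⟨h1, rfl, rfl⟩ := hL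
  rw [cons_single]
  exact single_mem_D (L := B :: _) ⟨⟨⟨M, hMB⟩, hd, link_top hMB h1 hM, h1⟩, rfl, rfl⟩ 1

lemma cm_mem {B E S : Finset α} {k : ℕ} (hlk : ∀ C : Finset α, C.Nonempty → C ⊆ S → lk B (E ∪ C))
    (hd : Disjoint B E) (hd1 : Disjoint B S) (hd2 : Disjoint E S)
    {x : W R α} (hx : x ∈ D R S k) : cons R B (mg R E x) ∈ D R (B ∪ (E ∪ S)) (k + 1) := by
  refine map_mem_D (f := cons R B ∘ₗ mg R E) (fun L hL => ?_) hx
  obtain ⟨h1, rfl, rfl⟩ := hL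
  cases L with
  | nil => simp
  | cons C L =>
    obtain ⟨h1, h2, h3, h4⟩ := h1
    simp only [LinearMap.comp_apply, mg_single, one_smul, mw_cons, cons_single]
    have hl := hlk C h1 (by simp [gs])
    simp only [gs, Finset.disjoint_union_right] at hd1 hd2
    refine single_mem_D (L := B :: (E ∪ C) :: L) ⟨⟨?_, ?_, hl, ?_, ?_, ?_, h4⟩, ?_, rfl⟩ 1
    · obtain ⟨a, ha, -⟩ := hl; exact ⟨a, ha⟩
    · simp [gs, Finset.disjoint_union_right, hd, hd1]
    · exact h1.mono Finset.subset_union_right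
    · rw [Finset.disjoint_union_left]; exact ⟨hd2.2, h2⟩
    · exact link_mono Finset.subset_union_right h3
    · simp [gs]

lemma cons_apply_self (B : Finset α) (x : W R α) (L) : cons R B x (B :: L) = x L := by
  refine Finsupp.mapDomain_apply (fun a b h => ?_) x L
  simpa using h

lemma cons_apply_ne {B C : Finset α} (h : B ≠ C) (x : W R α) (L) : cons R B x (C :: L) = 0 := by
  refine W_ext (f := Finsupp.lapply (C :: L) ∘ₗ cons R B) (g := 0) (fun G => ?_) x
  simp [Finsupp.single_apply, h]

lemma mg_apply {b : α} {S : Finset α} {k : ℕ} (hb : b ∉ S) {x : W R α} (hx : x ∈ D R S k)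
    {C : Finset α} (hC : b ∉ C) (L) : mg R {b} x (({b} ∪ C) :: L) = x (C :: L) := by
  refine eq_on_D (f := Finsupp.lapply (({b} ∪ C) :: L) ∘ₗ mg R {b}) (g := Finsupp.lapply (C :: L))
    (fun G hG => ?_) hx
  cases G with
  | nil => simp
  | cons C' G =>
    have hb' : b ∉ C' := fun h => hb (by rw [← hG.2.1]; simp [gs, h])
    have : ({b} ∪ C' = {b} ∪ C) ↔ C' = C := by
      constructor
      · intro h
        have := congrArg (fun T => Finset.erase T b) h
        simpa [← Finset.insert_eq, Finset.erase_insert, hb', hC] using this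
      · rintro rfl; rfl
    simp only [LinearMap.comp_apply, mg_single, one_smul, mw_cons, Finsupp.lapply_apply,
      Finsupp.single_apply, List.cons.injEq, this]

/-- splitting a two element block -/
lemma split_pair {r t : α} (hrt : r < t) {B C : Finset α} (hB : B.Nonempty) (hC : C.Nonempty)
    (hd : Disjoint B C) (hl : lk B C) (h : B ∪ C = {r, t}) : B = {t} ∧ C = {r} := by
  obtain ⟨a, ha, c, hc, hac⟩ := hl
  have e1 : a ∈ ({r, t} : Finset α) := h ▸ Finset.mem_union_left _ ha
  have e2 : c ∈ ({r, t} : Finset α) := h ▸ Finset.mem_union_right _ hc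
  simp only [Finset.mem_insert, Finset.mem_singleton] at e1 e2
  have haM : a = t ∧ c = r := by
    rcases e1 with rfl | rfl <;> rcases e2 with rfl | rfl
    · exact absurd hac (lt_irrefl _)
    · exact absurd hac (lt_asymm hrt)
    · exact ⟨rfl, rfl⟩
    · exact absurd hac (lt_irrefl _)
  obtain ⟨rfl, rfl⟩ := haM
  rw [Finset.disjoint_left] at hd
  have key : ∀ b, b ∈ B ∨ b ∈ C → b = c ∨ b = a := by
    intro b hb
    have : b ∈ ({c, a} : Finset α) := h ▸ Finset.mem_union.2 hb
    simpa using this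
  constructor
  · ext b
    simp only [Finset.mem_singleton]
    refine ⟨fun hb => ?_, fun hb => hb ▸ ha⟩
    rcases key b (Or.inl hb) with rfl | rfl
    · exact absurd hc (hd hb)
    · rfl
  · ext b
    simp only [Finset.mem_singleton]
    refine ⟨fun hb => ?_, fun hb => hb ▸ hc⟩
    rcases key b (Or.inr hb) with rfl | rfl
    · rfl
    · exact absurd hb (hd ha)

lemma Mg_cons {G : List (Finset α)} {E : Finset α} {L} (h : Mg G (E :: L)) :
    (∃ B C, B ∪ C = E ∧ G = B :: C :: L) ∨ ∃ G', G = E :: G' ∧ Mg G' L := by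
  generalize hX : E :: L = X at h
  cases h with
  | head B C L' =>
    simp only [List.cons.injEq] at hX
    obtain ⟨h1, rfl⟩ := hX
    exact Or.inl ⟨B, C, h1.symm, rfl⟩
  | tail B h =>
    simp only [List.cons.injEq] at hX
    obtain ⟨rfl, rfl⟩ := hX
    exact Or.inr ⟨_, rfl, h⟩

lemma val_ne_nil {S : Finset α} {k} {L} (h : L ∈ Val S k) (hS : S.Nonempty) :
    ∃ C L', L = C :: L' := by
  cases L with
  | nil => rw [← h.2.1] at hS; simp [gs] at hS
  | cons C L' => exact ⟨C, L', rfl⟩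

lemma Nv_theta {S : Finset α} {k : ℕ} (hS : S.Nonempty) {r t : α} (hr : ∀ a ∈ S, r < a)
    (ht : ∀ a ∈ S, a < t) (h : Nv R S k) : Nv R (insert t (insert r S)) (k + 1) := by
  obtain ⟨z, hz, hdz, L, hL, hG⟩ := h
  have hLv := mem_D_iff.1 hz L hL
  obtain ⟨s, hs⟩ := hS
  have hrt : r < t := (hr s hs).trans (ht s hs)
  have hrS : r ∉ S := fun h => (hr r h).false
  have htS : t ∉ S := fun h => (ht t h).false
  have e1 : insert t (insert r S) = {r, t} ∪ S := by ext a; simp <;> tauto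
  have e2 : insert t (insert r S) = {t} ∪ ({r} ∪ S) := by ext a; simp <;> tauto
  refine ⟨cons R {r, t} z - cons R {t} (mg R {r} z), Submodule.sub_mem _ ?_ ?_, ?_,
    {r, t} :: L, ?_, ?_⟩
  · rw [e1]; exact cons_mem (M := t) (by simp) ht (by simp [hrS, htS]) hz
  · rw [e2]
    refine cm_mem (fun C hC hCS => ⟨t, by simp, r, by simp, hrt⟩) (by simp [hrt.ne, hrt.ne']) (by simp [htS])
      (by simp [hrS]) hz
  · rw [map_sub, d_cons, d_cons, mg_mg, d_mg, hdz, Finset.union_comm {t} {r}]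
    simp [← Finset.insert_eq]
  · rw [Finsupp.sub_apply, cons_apply_self, cons_apply_ne, sub_zero]
    · exact hL
    · intro h
      have : r ∈ ({t} : Finset α) := by rw [h]; simp
      exact hrt.ne (by simpa using this)
  · intro G hOK hMg
    rcases Mg_cons hMg with ⟨B, C, hBC, rfl⟩ | ⟨G', rfl, hM'⟩
    · obtain ⟨C', L', rfl⟩ := val_ne_nil hLv ⟨s, hs⟩
      obtain ⟨h1, h2, h3, h4, h5, h6, h7⟩ := hOK
      rw [gs, Finset.disjoint_union_right] at h2
      obtain ⟨rfl, rfl⟩ := split_pair hrt h1 h4 h2.1 h3 hBC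
      obtain ⟨a, ha, c, hc, hac⟩ : lk {r} C' := h6
      have hcS : c ∈ S := by rw [← hLv.2.1]; simp [gs, hc]
      simp only [Finset.mem_singleton] at ha
      subst ha
      exact absurd hac (lt_asymm (hr c hcS))
    · exact hG G' hOK.2.2.2 hM'

lemma Nv_phi {S : Finset α} {k : ℕ} (hS : S.Nonempty) {p q x : α} (hp : ∀ a ∈ S, a < p)
    (hpq : p < q) (hqx : q < x) (h : Nv R S k) :
    Nv R (insert x (insert q (insert p S))) (k + 2) := by
  obtain ⟨z, hz, hdz, L, hL, hG⟩ := h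
  have hLv := mem_D_iff.1 hz L hL
  have hpS : p ∉ S := fun h => (hp p h).false
  have hqS : q ∉ S := fun h => ((hp q h).trans hpq).false
  have hxS : x ∉ S := fun h => ((hp x h).trans (hpq.trans hqx)).false
  have hpx := hpq.trans hqx
  refine ⟨cons R {x, p} (cons R {q} z) - cons R {x} (cons R {p, q} z)
    + cons R {x} (cons R {p} (mg R {q} z)), Submodule.add_mem _ (Submodule.sub_mem _ ?_ ?_) ?_, ?_,
    {x, p} :: {q} :: L, ?_, ?_⟩
  · have : insert x (insert q (insert p S)) = {x, p} ∪ ({q} ∪ S) := by ext a; simp <;> tauto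
    rw [this]
    refine cons_mem (M := x) (by simp) ?_ ?_ (cons_mem (M := q) (by simp) ?_ ?_ hz)
    · intro a ha
      simp only [Finset.mem_union, Finset.mem_singleton] at ha
      rcases ha with rfl | ha
      exacts [hqx, (hp a ha).trans hpx]
    · simp [hxS, hpS, hqx.ne', hpq.ne, hqx.ne, hpq.ne']
    · exact fun a ha => (hp a ha).trans hpq
    · simp [hqS]
  · have : insert x (insert q (insert p S)) = {x} ∪ ({p, q} ∪ S) := by ext a; simp <;> tauto
    rw [this]
    refine cons_mem (M := x) (by simp) ?_ ?_ (cons_mem (M := q) (by simp) ?_ ?_ hz)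
    · intro a ha
      simp only [Finset.mem_union, Finset.mem_singleton, Finset.mem_insert] at ha
      rcases ha with (rfl | rfl) | ha
      exacts [hpx, hqx, (hp a ha).trans hpx]
    · simp [hxS, hqx.ne', hpx.ne']
    · exact fun a ha => (hp a ha).trans hpq
    · simp [hqS, hpS]
  · have : insert x (insert q (insert p S)) = {x} ∪ ({p} ∪ ({q} ∪ S)) := by ext a; simp <;> tauto
    rw [this]
    refine cons_mem (M := x) (by simp) ?_ ?_ (cm_mem ?_ ?_ ?_ ?_ hz)
    · intro a ha
      simp only [Finset.mem_union, Finset.mem_singleton] at ha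
      rcases ha with rfl | rfl | ha
      exacts [hpx, hqx, (hp a ha).trans hpx]
    · simp [hxS, hqx.ne', hpx.ne']
    · rintro C ⟨c, hc⟩ hCS
      exact ⟨p, by simp, c, by simp [hc], hp c (hCS hc)⟩
    · simp [hpq.ne]
    · simp [hpS]
    · simp [hqS]
  · have u1 : ({x, p} : Finset α) ∪ {q} = {x} ∪ {p, q} := by ext a; simp <;> tauto
    have u2 : ({x, p} : Finset α) = {x} ∪ {p} := rfl
    have u3 : ({p, q} : Finset α) = {p} ∪ {q} := rfl
    simp only [map_add, map_sub, d_cons, mg_cons, d_mg, hdz, map_zero, sub_zero, mg_mg, u1]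
    rw [← u2, ← u3]; abel
  · have hne : ({x} : Finset α) ≠ {x, p} := by
      intro h
      have : p ∈ ({x} : Finset α) := by rw [h]; simp
      exact hpx.ne (by simpa using this)
    rw [Finsupp.add_apply, Finsupp.sub_apply, cons_apply_self, cons_apply_self, cons_apply_ne hne,
      cons_apply_ne hne]
    simpa using hL
  · intro G hOK hMg
    rcases Mg_cons hMg with ⟨B, C, hBC, rfl⟩ | ⟨G', rfl, hM'⟩
    · obtain ⟨h1, h2, h3, h4, h5, h6, h7⟩ := hOK
      rw [gs, Finset.disjoint_union_right] at h2
      obtain ⟨rfl, rfl⟩ := split_pair hpx h1 h4 h2.1 h3 (by rw [hBC, Finset.pair_comm])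
      obtain ⟨a, ha, c, hc, hac⟩ : lk {p} {q} := h6
      simp only [Finset.mem_singleton] at ha hc
      subst ha; subst hc
      exact absurd hac (lt_asymm hpq)
    · rcases Mg_cons hM' with ⟨B, C, hBC, rfl⟩ | ⟨G', rfl, hN⟩
      · obtain ⟨-, -, -, ⟨b, hb⟩, h5, -, ⟨c, hc⟩, -⟩ := hOK
        have e1 : b ∈ ({q} : Finset α) := hBC ▸ Finset.mem_union_left _ hb
        have e2 : c ∈ ({q} : Finset α) := hBC ▸ Finset.mem_union_right _ hc
        simp only [Finset.mem_singleton] at e1 e2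
        subst e1; subst e2
        exact Finset.disjoint_left.1 h5 hb (by simp [gs, hc])
      · exact hG G' hOK.2.2.2.2.2.2 hN

lemma Nv_psi {S : Finset α} {k : ℕ} (hS : S.Nonempty) {p q x : α} (hp : ∀ a ∈ S, x < a)
    (hpq : p < q) (hqx : q < x) (h : Nv R S k) :
    Nv R (insert p (insert q (insert x S))) (k + 1) := by
  obtain ⟨z, hz, hdz, L, hL, hG⟩ := h
  have hLv := mem_D_iff.1 hz L hL
  have hxS : x ∉ S := fun h => (hp x h).false
  have hqS : q ∉ S := fun h => (hqx.trans (hp q h)).false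
  have hpS : p ∉ S := fun h => ((hpq.trans hqx).trans (hp p h)).false
  have hpx := hpq.trans hqx
  obtain ⟨E, L, rfl⟩ := val_ne_nil hLv hS
  have hES : E ⊆ S := by rw [← hLv.2.1]; simp [gs]
  have hqE : q ∉ E := fun h => hqS (hES h)
  refine ⟨cons R {p, x} (mg R {q} z) - cons R {x} (mg R {p, q} z), Submodule.sub_mem _ ?_ ?_, ?_,
    {p, x} :: ({q} ∪ E) :: L, ?_, ?_⟩
  · have : insert p (insert q (insert x S)) = {p, x} ∪ ({q} ∪ S) := by ext a; simp <;> tauto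
    rw [this]
    refine cm_mem (fun C _ _ => ⟨x, by simp, q, by simp, hqx⟩) ?_ ?_ ?_ hz
    · simp [hqx.ne', hpq.ne, hqx.ne, hpq.ne']
    · simp [hpS, hxS]
    · simp [hqS]
  · have : insert p (insert q (insert x S)) = {x} ∪ ({p, q} ∪ S) := by ext a; simp <;> tauto
    rw [this]
    refine cm_mem (fun C _ _ => ⟨x, by simp, q, by simp, hqx⟩) ?_ ?_ ?_ hz
    · simp [hpx.ne', hqx.ne']
    · simp [hxS]
    · simp [hqS, hpS]
  · have u1 : ({p, x} : Finset α) ∪ {q} = {x} ∪ {p, q} := by ext a; simp <;> tauto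
    simp [d_cons, d_mg, hdz, mg_mg, u1]
  · have hne : ({x} : Finset α) ≠ {p, x} := by
      intro h
      have : p ∈ ({x} : Finset α) := by rw [h]; simp
      exact hpx.ne (by simpa using this)
    rw [Finsupp.sub_apply, cons_apply_self, cons_apply_ne hne, sub_zero, mg_apply hqS hz hqE]
    exact hL
  · intro G hOK hMg
    rcases Mg_cons hMg with ⟨B, C, hBC, rfl⟩ | ⟨G', rfl, hM'⟩
    · obtain ⟨h1, h2, h3, h4, h5, h6, h7⟩ := hOK
      rw [gs, Finset.disjoint_union_right] at h2
      obtain ⟨rfl, rfl⟩ := split_pair hpx h1 h4 h2.1 h3 hBC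
      obtain ⟨a, ha, c, hc, hac⟩ : lk {p} ({q} ∪ E) := h6
      simp only [Finset.mem_singleton, Finset.mem_union] at ha hc
      subst ha
      rcases hc with rfl | hc
      · exact absurd hac (lt_asymm hpq)
      · exact absurd hac (lt_asymm (hpx.trans (hp c (hES hc))))
    · rcases Mg_cons hM' with ⟨B, C, hBC, rfl⟩ | ⟨G', rfl, hN⟩
      · obtain ⟨-, -, ⟨a, ha, c, hc, hac⟩, ⟨h1, h2, ⟨a', ha', c', hc', hac'⟩, h4, h5, h6, h7⟩⟩ := hOK
        have hmem : ∀ b, b ∈ B ∪ C → b = q ∨ b ∈ E := by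
          intro b hb; rw [hBC] at hb; simpa using hb
        have hax : a ≤ x := by
          simp only [Finset.mem_insert, Finset.mem_singleton] at ha
          rcases ha with rfl | rfl
          exacts [hpx.le, le_rfl]
        have hcq : c = q := by
          rcases hmem c (Finset.mem_union_left _ hc) with h | h
          · exact h
          · exact absurd (hac.trans_le hax) (lt_asymm (hp c (hES h)))
        subst hcq
        rw [gs, Finset.disjoint_union_right] at h2
        have hC : ∀ b ∈ C, b ∈ E := by
          intro b hb
          rcases hmem b (Finset.mem_union_right _ hb) with rfl | h
          · exact absurd hb (Finset.disjoint_left.1 h2.1 hc)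
          · exact h
        have hcC : c ∉ C := Finset.disjoint_left.1 h2.1 hc
        have ha'c : a' ≠ c := by
          rintro rfl
          exact absurd hac' (lt_asymm (hqx.trans (hp c' (hES (hC c' hc')))))
        have hBE : B.erase c ∪ C = E := by
          ext b
          have := Finset.ext_iff.1 hBC b
          simp only [Finset.mem_union, Finset.mem_erase, Finset.mem_singleton] at this ⊢
          by_cases hb : b = c
          · subst hb; simp [hqE, hcC]
          · simpa [hb] using this
        have hmg := Mg.head (B.erase c) C L
        rw [hBE] at hmg
        refine hG (B.erase c :: C :: L) ⟨⟨a', Finset.mem_erase.2 ⟨ha'c, ha'⟩⟩, ?_, ?_, h4, h5, h6, h7⟩ hmg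
        · rw [gs, Finset.disjoint_union_right]
          exact ⟨h2.1.mono_left (Finset.erase_subset _ _), h2.2.mono_left (Finset.erase_subset _ _)⟩
        · exact ⟨a', Finset.mem_erase.2 ⟨ha'c, ha'⟩, c', hc', hac'⟩
      · obtain ⟨-, -, -, ⟨h1, h2, h3, h4⟩⟩ := hOK
        refine hG (E :: G') ⟨hLv.1.1, h2.mono_left Finset.subset_union_right, ?_, h4⟩ (Mg.tail E hN)
        have hgs := hN.gs
        cases G' with
        | nil => trivial
        | cons C G' =>
          obtain ⟨a, ha, c, hc, hac⟩ : lk ({q} ∪ E) C := h3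
          have hcS : c ∈ S := by
            rw [← hLv.2.1, gs, hgs]; simp [gs, hc]
          simp only [Finset.mem_union, Finset.mem_singleton] at ha
          rcases ha with rfl | ha
          · exact absurd hac (lt_asymm (hqx.trans (hp c hcS)))
          · exact ⟨a, ha, c, hc, hac⟩

variable (R) in
theorem nonvanish [Nontrivial R] (m : ℕ) : ∀ j, 3 * j ≤ 2 * m → m ≤ 3 * j → ∀ S : Finset α, S.card = m + 1 →
    Nv R S (j + 1) := by
  induction m using Nat.strong_induction_on with
  | _ m ih =>
  intro j h1 h2 S hS
  have cne : ∀ T : Finset α, 0 < T.card → T.Nonempty := fun T => Finset.card_pos.1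
  rcases Nat.eq_zero_or_pos m with rfl | hm
  · obtain rfl : j = 0 := by omega
    obtain ⟨a, rfl⟩ := Finset.card_eq_one.1 hS
    refine ⟨single [{a}] 1, single_mem_D (L := [{a}]) ⟨⟨by simp, by simp [gs], trivial, trivial⟩, by simp [gs], rfl⟩ 1,
      by simp [dw_cons], [{a}], by simp, ?_⟩
    intro G hOK hMg
    rcases Mg_cons hMg with ⟨B, C, hBC, rfl⟩ | ⟨G', rfl, hM'⟩
    · obtain ⟨⟨b, hb⟩, h5, -, ⟨c, hc⟩, -⟩ := hOK
      have e1 : b ∈ ({a} : Finset α) := hBC ▸ Finset.mem_union_left _ hb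
      have e2 : c ∈ ({a} : Finset α) := hBC ▸ Finset.mem_union_right _ hc
      simp only [Finset.mem_singleton] at e1 e2
      subst e1; subst e2
      exact Finset.disjoint_left.1 h5 hb (by simp [gs, hc])
    · cases hM'
  · by_cases c1 : 3 * j + 3 ≤ 2 * m
    · obtain ⟨p, S1, rfl, hp, k1⟩ := exists_bot (cne S (by omega))
      obtain ⟨q, S2, rfl, hq, k2⟩ := exists_bot (cne S1 (by omega))
      obtain ⟨x, S3, rfl, hx, k3⟩ := exists_bot (cne S2 (by omega))
      obtain ⟨j, rfl⟩ : ∃ j', j = j' + 1 := ⟨j - 1, by omega⟩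
      exact Nv_psi (cne S3 (by omega)) hx (hp q (by simp)) (hq x (by simp))
        (ih (m - 3) (by omega) j (by omega) (by omega) S3 (by omega))
    · by_cases c2 : m + 3 ≤ 3 * j
      · obtain ⟨x, S1, rfl, hx, k1⟩ := exists_top (cne S (by omega))
        obtain ⟨q, S2, rfl, hq, k2⟩ := exists_top (cne S1 (by omega))
        obtain ⟨p, S3, rfl, hp, k3⟩ := exists_top (cne S2 (by omega))
        obtain ⟨j, rfl⟩ : ∃ j', j = j' + 2 := ⟨j - 2, by omega⟩
        exact Nv_phi (cne S3 (by omega)) hp (hq p (by simp)) (hx q (by simp))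
          (ih (m - 3) (by omega) j (by omega) (by omega) S3 (by omega))
      · obtain ⟨t, S1, rfl, ht, k1⟩ := exists_top (cne S (by omega))
        obtain ⟨r, S2, rfl, hr, k2⟩ := exists_bot (cne S1 (by omega))
        obtain ⟨j, rfl⟩ : ∃ j', j = j' + 1 := ⟨j - 1, by omega⟩
        exact Nv_theta (cne S2 (by omega)) hr (fun a ha => ht a (by simp [ha]))
          (ih (m - 2) (by omega) j (by omega) (by omega) S2 (by omega))

end nonvanish
end ER

set_option linter.unusedSectionVars false
namespace ER
open Finsupp
section integral

lemma div_zero {Q : Type} [AddCommGroup Q] [Module.Finite ℤ Q]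
    (h : ∀ p : ℕ, p.Prime → ∀ x : Q, ∃ y : Q, x = (p : ℤ) • y) (x : Q) : x = 0 := by
  have h' : ∀ m : ℕ, m ≠ 0 → ∀ x : Q, ∃ y : Q, x = (m : ℤ) • y := by
    intro m
    induction m using induction_on_primes with
    | zero => intro h0; exact absurd rfl h0
    | one => intro _ x; exact ⟨x, by simp⟩
    | prime_mul p a hp ih =>
      intro h0 x
      obtain ⟨y, rfl⟩ := h p hp x
      obtain ⟨z, rfl⟩ := ih (by rintro rfl; simp at h0) y
      exact ⟨z, by push_cast; rw [mul_smul]⟩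
  obtain ⟨r, hr, hz⟩ := Submodule.exists_sub_one_mem_and_smul_eq_zero_of_fg_of_le_smul
    (Ideal.span {(2 : ℤ)}) (⊤ : Submodule ℤ Q) Module.Finite.fg_top (by
      intro x _
      obtain ⟨y, rfl⟩ := h 2 Nat.prime_two x
      exact Submodule.smul_mem_smul (Ideal.mem_span_singleton_self _) trivial)
  rw [Ideal.mem_span_singleton] at hr
  have hr0 : r.natAbs ≠ 0 := by omega
  obtain ⟨y, rfl⟩ := h' _ hr0 x
  have := hz y trivial
  rcases Int.natAbs_eq r with e | e
  · rw [← e]; exact this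
  · rw [e] at this; simpa using this

variable {α : Type} [LinearOrder α]

lemma Val_finite (S : Finset α) (k : ℕ) : (Val S k).Finite := by
  have : (Val S k) ⊆ {L | L.length = k ∧ ∀ B ∈ L, B ∈ S.powerset} := by
    intro L hL
    refine ⟨hL.2.2, ?_⟩
    rw [← hL.2.1]
    clear hL
    induction L with
    | nil => simp
    | cons B L ih =>
      intro C hC
      rw [Finset.mem_powerset, gs]
      rcases List.mem_cons.1 hC with rfl | hC
      · exact Finset.subset_union_left
      · exact (Finset.mem_powerset.1 (ih C hC)).trans Finset.subset_union_right
  refine Set.Finite.subset ?_ this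
  clear this
  induction k with
  | zero =>
    refine (Set.finite_singleton []).subset ?_
    rintro L ⟨h, -⟩
    simpa using h
  | succ k ih =>
    refine (Set.Finite.image2 List.cons S.powerset.finite_toSet ih).subset ?_
    rintro L ⟨h, h2⟩
    cases L with
    | nil => simp at h
    | cons B L =>
      exact ⟨B, h2 B (by simp), L, ⟨by simpa using h, fun C hC => h2 C (by simp [hC])⟩, rfl⟩

variable (p : ℕ)

noncomputable def red : W ℤ α →+ W (ZMod p) α := Finsupp.mapRange.addMonoidHom (Int.castAddHom (ZMod p))

lemma red_apply (x : W ℤ α) (L) : red p x L = ((x L : ℤ) : ZMod p) := rfl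

@[simp] lemma red_single (L : List (Finset α)) (r : ℤ) :
    red p (single L r) = single L (r : ZMod p) := by
  simp [red]

lemma red_cons (B : Finset α) (x : W ℤ α) : red p (cons ℤ B x) = cons (ZMod p) B (red p x) := by
  have : (red p).comp (cons ℤ B).toAddMonoidHom = (cons (ZMod p) B).toAddMonoidHom.comp (red p) := by
    refine Finsupp.addHom_ext fun L r => ?_
    simp
  exact DFunLike.congr_fun this x

lemma red_dw (L : List (Finset α)) : red p (dw ℤ L) = dw (ZMod p) L := by
  induction L with
  | nil => simp
  | cons B L ih =>
    rw [dw_cons, dw_cons, map_sub, red_cons, ih]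
    cases L <;> simp

lemma red_d (x : W ℤ α) : red p (d ℤ x) = d (ZMod p) (red p x) := by
  have : (red p).comp (d ℤ).toAddMonoidHom = (d (ZMod p)).toAddMonoidHom.comp (red (α := α) p) := by
    refine Finsupp.addHom_ext fun L r => ?_
    simp only [AddMonoidHom.comp_apply, LinearMap.toAddMonoidHom_coe, d_single, red_single, map_zsmul, red_dw]
    rw [Int.cast_smul_eq_zsmul]
  exact DFunLike.congr_fun this x

lemma step_p (hp : p.Prime) {S : Finset α} {k : ℕ} (hE : Ex (ZMod p) S k) {c : W ℤ α}
    (hc : c ∈ D ℤ S k) (hdc : d ℤ c = 0) :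
    ∃ e ∈ D ℤ S (k + 1), ∃ c' ∈ D ℤ S k, d ℤ c' = 0 ∧ c = d ℤ e + (p : ℤ) • c' := by
  have hp0 : (p : ℤ) ≠ 0 := by exact_mod_cast hp.ne_zero
  have : NeZero p := ⟨hp.ne_zero⟩
  obtain ⟨e', he', hde⟩ := hE (red p c) (mem_D_iff.2 fun L hL => mem_D_iff.1 hc L (by
    intro h; apply hL; rw [red_apply, h]; simp)) (by rw [← red_d, hdc, map_zero])
  let e : W ℤ α := Finsupp.mapRange (fun z : ZMod p => (z.val : ℤ)) (by simp) e'
  have heD : e ∈ D ℤ S (k + 1) := mem_D_iff.2 fun L hL => mem_D_iff.1 he' L (by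
    intro h; apply hL; simp [e, h])
  have hre : red p e = e' := by
    ext L; simp [red_apply, e]
  have hr : red p (c - d ℤ e) = 0 := by rw [map_sub, red_d, hre, hde, sub_self]
  have hcd : c - d ℤ e ∈ D ℤ S k := Submodule.sub_mem _ hc (d_mem heD)
  let c' : W ℤ α := Finsupp.mapRange (fun z : ℤ => z / p) (by simp) (c - d ℤ e)
  have hc' : (p : ℤ) • c' = c - d ℤ e := by
    ext L
    have h1 : ((((c - d ℤ e) L : ℤ)) : ZMod p) = 0 := by rw [← red_apply, hr]; rfl
    rw [ZMod.intCast_zmod_eq_zero_iff_dvd] at h1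
    rw [Finsupp.smul_apply, Finsupp.mapRange_apply, smul_eq_mul]
    exact Int.mul_ediv_cancel' h1
  refine ⟨e, heD, c', ?_, ?_, ?_⟩
  · exact mem_D_iff.2 fun L hL => mem_D_iff.1 hcd L (by
      intro h; apply hL; rw [Finsupp.mapRange_apply, h]; simp)
  · have : (p : ℤ) • d ℤ c' = 0 := by
      rw [← map_smul, hc', map_sub, hdc, d_d, sub_zero]
    exact (smul_eq_zero.1 this).resolve_left hp0
  · rw [hc']; abel

theorem Ex_int {S : Finset α} {k : ℕ} (h : ∀ p : ℕ, p.Prime → Ex (ZMod p) S k) : Ex ℤ S k := by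
  let Z : Submodule ℤ (W ℤ α) := LinearMap.ker (d ℤ) ⊓ D ℤ S k
  let B : Submodule ℤ (W ℤ α) := (D ℤ S (k + 1)).map (d ℤ)
  have : Finite (Val S k) := Val_finite S k
  have : IsNoetherian ℤ (D ℤ S k) :=
    isNoetherian_of_linearEquiv (Finsupp.supportedEquivFinsupp (M := ℤ) (R := ℤ) (Val S k)).symm
  have : Module.Finite ℤ Z := Module.Finite.of_injective (Submodule.inclusion (inf_le_right : Z ≤ D ℤ S k))
    (Submodule.inclusion_injective _)
  have key := div_zero (Q := Z ⧸ B.comap Z.subtype) (fun p hp x => by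
    obtain ⟨⟨c, hc⟩, rfl⟩ := Submodule.mkQ_surjective _ x
    obtain ⟨e, he, c', hc', hd', hcc⟩ := step_p p hp (h p hp) hc.2 hc.1
    refine ⟨Submodule.mkQ _ ⟨c', hd', hc'⟩, ?_⟩
    rw [← map_smul, ← sub_eq_zero, ← map_sub, Submodule.mkQ_apply, Submodule.Quotient.mk_eq_zero]
    exact ⟨e, he, by simp [hcc]⟩)
  intro c hc hdc
  have := key (Submodule.mkQ _ ⟨c, hdc, hc⟩)
  rw [Submodule.mkQ_apply, Submodule.Quotient.mk_eq_zero] at this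
  obtain ⟨e, he, h⟩ := this
  exact ⟨e, he, h⟩

theorem vanish_int (S : Finset α) (k : ℕ) (h : Good S.card k) : Ex ℤ S k :=
  Ex_int fun p hp => by
    have : Fact p.Prime := ⟨hp⟩
    exact vanish (ZMod p) S.card S rfl k h

end integral
end ER

set_option linter.unusedSectionVars false
namespace ER
open Finsupp
section transfer
variable {n : ℕ}

def blk (U : Finset (Fin n)) : List (Finset (Fin n)) → List (Finset (Fin n))
  | [] => [Finset.univ \ U]
  | S :: L => (S \ U) :: blk S L

def Ch (U : Finset (Fin n)) : List (Finset (Fin n)) → Prop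
  | [] => U ⊂ Finset.univ
  | S :: L => U ⊂ S ∧ Ch S L

lemma Ch_iff (U : Finset (Fin n)) (L) : List.IsChain (· ⊂ ·) (U :: (L ++ [Finset.univ])) ↔ Ch U L := by
  induction L generalizing U with
  | nil => simp [Ch]
  | cons S L ih => simp only [List.cons_append, List.isChain_cons_cons, Ch, ih]

def trip (X : List (Finset (Fin n))) : Prop :=
  ∀ i, ∀ h : i + 2 < X.length,
    ∃ a ∈ X.get ⟨i + 1, by omega⟩ \ X.get ⟨i, by omega⟩,
      ∃ c ∈ X.get ⟨i + 2, h⟩ \ X.get ⟨i + 1, by omega⟩, c < a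

lemma trip_cons (A B C : Finset (Fin n)) (X) :
    trip (A :: B :: C :: X) ↔ lk (B \ A) (C \ B) ∧ trip (B :: C :: X) := by
  constructor
  · intro h
    refine ⟨h 0 (by simp), fun i hi => h (i + 1) (by simpa using hi)⟩
  · rintro ⟨h1, h2⟩ i hi
    cases i with
    | zero => exact h1
    | succ i => exact h2 i (by simpa using hi)

lemma trip_two (A B : Finset (Fin n)) : trip [A, B] := by
  intro i hi; simp at hi

lemma gs_blk (U : Finset (Fin n)) (L) (h : Ch U L) : gs (blk U L) = Finset.univ \ U := by
  induction L generalizing U with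
  | nil => simp [blk, gs]
  | cons S L ih =>
    rw [blk, gs, ih S h.2]
    ext a
    have hsub := h.1.1
    have := @hsub a
    simp only [Finset.mem_union, Finset.mem_sdiff, Finset.mem_univ, true_and]
    tauto

lemma OK_blk (U : Finset (Fin n)) (L) (h : Ch U L) :
    OK (blk U L) ↔ trip (U :: (L ++ [Finset.univ])) := by
  induction L generalizing U with
  | nil =>
    simp only [List.nil_append, trip_two, iff_true]
    exact ⟨Finset.sdiff_nonempty.2 h.2, by simp [gs], trivial, trivial⟩
  | cons S L ih =>
    have hd : Disjoint (S \ U) (gs (blk S L)) := by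
      rw [gs_blk S L h.2, Finset.disjoint_left]
      intro a ha
      simp only [Finset.mem_sdiff, Finset.mem_univ, true_and, not_not] at ha ⊢
      exact ha.1
    have hne : (S \ U).Nonempty := Finset.sdiff_nonempty.2 h.1.2
    have e : OK (blk U (S :: L)) ↔ link (S \ U) (blk S L) ∧ OK (blk S L) :=
      ⟨fun h => ⟨h.2.2.1, h.2.2.2⟩, fun h => ⟨hne, hd, h.1, h.2⟩⟩
    rw [e, ih S h.2]
    cases L with
    | nil => exact (trip_cons _ _ _ _).symm
    | cons T L => exact (trip_cons _ _ _ _).symm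

lemma IsFace_iff (L : List (Finset (Fin n))) : IsFace n L ↔ Ch ∅ L ∧ OK (blk ∅ L) := by
  constructor
  · rintro ⟨h1, h2⟩
    have h := (Ch_iff ∅ L).1 h1
    exact ⟨h, (OK_blk ∅ L h).2 h2⟩
  · rintro ⟨h1, h2⟩
    exact ⟨(Ch_iff ∅ L).2 h1, (OK_blk ∅ L h1).1 h2⟩

lemma len_blk (U : Finset (Fin n)) (L) : (blk U L).length = L.length + 1 := by
  induction L generalizing U with
  | nil => rfl
  | cons S L ih => simp [blk, ih]

lemma blk_inj (U : Finset (Fin n)) (L L') (h : Ch U L) (h' : Ch U L') (e : blk U L = blk U L') :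
    L = L' := by
  induction L generalizing U L' with
  | nil =>
    cases L' with
    | nil => rfl
    | cons S' L' =>
      have := congrArg List.length e
      simp [blk, len_blk] at this
  | cons S L ih =>
    cases L' with
    | nil =>
      have := congrArg List.length e
      simp [blk, len_blk] at this
    | cons S' L' =>
      simp only [blk, List.cons.injEq] at e
      have hS : S = S' := by
        rw [← Finset.sdiff_union_of_subset h.1.1, e.1, Finset.sdiff_union_of_subset h'.1.1]
      subst hS
      rw [ih S L' h.2 h'.2 e.2]

lemma blk_surj (U : Finset (Fin n)) (B : Finset (Fin n)) (X) (h : OK (B :: X))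
    (hg : gs (B :: X) = Finset.univ \ U) : ∃ L, Ch U L ∧ blk U L = B :: X := by
  induction X generalizing U B with
  | nil =>
    have hB : B = Finset.univ \ U := by simpa [gs] using hg
    refine ⟨[], ?_, by rw [blk, hB]⟩
    refine ⟨Finset.subset_univ _, ?_⟩
    rw [← Finset.sdiff_nonempty, ← hB]; exact h.1
  | cons C X ih =>
    obtain ⟨h1, h2, h3, h4⟩ := h
    have hm : ∀ a, (a ∈ B ∨ a ∈ gs (C :: X)) ↔ a ∉ U := by
      intro a
      have := Finset.ext_iff.1 hg a
      rw [gs] at this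
      simpa only [Finset.mem_union, Finset.mem_sdiff, Finset.mem_univ, true_and] using this
    have hd := Finset.disjoint_left.1 h2
    obtain ⟨L, hL, hbl⟩ := ih (U ∪ B) C h4 (by
      ext a
      have := hm a; have := @hd a
      simp only [Finset.mem_union, Finset.mem_sdiff, Finset.mem_univ, true_and]
      tauto)
    refine ⟨(U ∪ B) :: L, ⟨⟨Finset.subset_union_left, ?_⟩, hL⟩, ?_⟩
    · intro hs
      obtain ⟨b, hb⟩ := h1
      exact (hm b).1 (Or.inl hb) (hs (Finset.mem_union_right _ hb))
    · rw [blk, hbl]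
      congr 1
      ext a
      have := hm a
      simp only [Finset.mem_union, Finset.mem_sdiff]
      tauto

lemma merge_blk (U S : Finset (Fin n)) (L) (hU : U ⊆ S) (h : Ch S L) :
    ∃ C X, blk S L = C :: X ∧ blk U L = ((S \ U) ∪ C) :: X := by
  cases L with
  | nil =>
    refine ⟨_, _, rfl, ?_⟩
    rw [blk]; congr 1
    ext a
    have := @hU a
    simp only [Finset.mem_union, Finset.mem_sdiff, Finset.mem_univ, true_and]
    tauto
  | cons T L =>
    refine ⟨_, _, rfl, ?_⟩
    rw [blk]; congr 1
    ext a
    have := @hU a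
    have hsub := h.1.1
    have := @hsub a
    simp only [Finset.mem_union, Finset.mem_sdiff]
    tauto

lemma Ch_mono {U S : Finset (Fin n)} (h : U ⊂ S) {L} (hL : Ch S L) : Ch U L := by
  cases L with
  | nil => exact h.trans hL
  | cons T L => exact ⟨h.trans hL.1, hL.2⟩

lemma Ch_erase (U : Finset (Fin n)) (L) (h : Ch U L) (i : ℕ) : Ch U (L.eraseIdx i) := by
  induction L generalizing U i with
  | nil => simpa using h
  | cons S L ih =>
    cases i with
    | zero => exact Ch_mono h.1 h.2
    | succ i => exact ⟨h.1, ih S h.2 i⟩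

lemma Mg_erase (U : Finset (Fin n)) (L) (h : Ch U L) (i : ℕ) (hi : i < L.length) :
    Mg (blk U L) (blk U (L.eraseIdx i)) := by
  induction L generalizing U i with
  | nil => simp at hi
  | cons S L ih =>
    cases i with
    | zero =>
      obtain ⟨C, X, e1, e2⟩ := merge_blk U S L h.1.1 h.2
      simp only [List.eraseIdx_cons_zero]
      rw [blk, e1, e2]
      exact Mg.head _ _ _
    | succ i => exact Mg.tail _ (ih S h.2 i (by simpa using hi))

lemma dw_blk (U : Finset (Fin n)) (L) (h : Ch U L) :
    dw ℤ (blk U L) = ∑ i ∈ Finset.range L.length, single (blk U (L.eraseIdx i)) ((-1 : ℤ) ^ i) := by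
  induction L generalizing U with
  | nil => simp [blk, dw_cons]
  | cons S L ih =>
    obtain ⟨C, X, e1, e2⟩ := merge_blk U S L h.1.1 h.2
    rw [List.length_cons, Finset.sum_range_succ', blk, dw_cons, ih S h.2]
    simp only [List.eraseIdx_cons_zero, List.eraseIdx_cons_succ, blk, map_sum, cons_single]
    rw [e1, e2, mw_cons, sub_eq_neg_add, ← Finset.sum_neg_distrib]
    congr 1
    refine Finset.sum_congr rfl fun i _ => ?_
    rw [← Finsupp.single_neg, pow_succ, mul_neg_one]

noncomputable def io (n k : ℕ) : (HFace n k →₀ ℤ) →ₗ[ℤ] W ℤ (Fin n) :=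
  Finsupp.lmapDomain ℤ ℤ (fun L => blk ∅ L.1)

lemma io_single (k : ℕ) (L : HFace n k) (r : ℤ) : io n k (single L r) = single (blk ∅ L.1) r := by
  simp [io]

lemma io_inj (k : ℕ) : Function.Injective (io n k) := by
  refine Finsupp.mapDomain_injective fun L L' e => ?_
  exact Subtype.ext (blk_inj ∅ _ _ ((IsFace_iff _).1 L.2.1).1 ((IsFace_iff _).1 L'.2.1).1 e)

lemma blk_val {k : ℕ} (L : HFace n k) : blk ∅ L.1 ∈ Val Finset.univ (k + 1) := by
  have := (IsFace_iff _).1 L.2.1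
  refine ⟨this.2, ?_, ?_⟩
  · rw [gs_blk _ _ this.1]; simp
  · rw [len_blk, L.2.2]

lemma io_mem {k : ℕ} (x : HFace n k →₀ ℤ) : io n k x ∈ D ℤ Finset.univ (k + 1) := by
  induction x using Finsupp.induction_linear with
  | zero => simp
  | add f g hf hg => rw [map_add]; exact Submodule.add_mem _ hf hg
  | single L r => rw [io_single]; exact single_mem_D (blk_val L) r

lemma io_surj {k : ℕ} {y : W ℤ (Fin n)} (hy : y ∈ D ℤ Finset.univ (k + 1)) :
    ∃ x, io n k x = y := by
  have : y ∈ LinearMap.range (io n k) := by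
    refine map_mem_D (f := LinearMap.id) (fun X hX => ?_) hy
    cases X with
    | nil => have := hX.2.2; simp at this
    | cons B X =>
      obtain ⟨L, hL, e⟩ := blk_surj ∅ B X hX.1 (by rw [hX.2.1]; simp)
      refine ⟨single ⟨L, (IsFace_iff L).2 ⟨hL, e ▸ hX.1⟩, ?_⟩ 1, ?_⟩
      · have := hX.2.2
        rw [← e, len_blk] at this
        omega
      · exact (io_single k _ 1).trans (by rw [e]; rfl)
  exact this

lemma io_bdryElem (k : ℕ) (L : HFace n (k + 1)) :
    io n k (bdryElem n k L) = dw ℤ (blk ∅ L.1) := by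
  have hf := (IsFace_iff _).1 L.2.1
  rw [dw_blk _ _ hf.1, L.2.2, bdryElem, map_sum, Finset.sum_range]
  refine Finset.sum_congr rfl fun i _ => ?_
  have hi : (i : ℕ) < L.1.length := by rw [L.2.2]; exact i.2
  have h : IsFace n (L.1.eraseIdx i) ∧ (L.1.eraseIdx i).length = k := by
    refine ⟨(IsFace_iff _).2 ⟨Ch_erase _ _ hf.1 _, (Mg_erase _ _ hf.1 _ hi).OK hf.2⟩, ?_⟩
    rw [List.length_eraseIdx_of_lt hi, L.2.2]; rfl
  rw [dif_pos h]
  exact io_single k _ _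

lemma io_bdry (k : ℕ) (x : HFace n (k + 1) →₀ ℤ) :
    io n k (bdry n k x) = d ℤ (io n (k + 1) x) := by
  induction x using Finsupp.induction_linear with
  | zero => simp
  | add f g hf hg => simp only [map_add, hf, hg]
  | single L r =>
    rw [io_single, d_single, ← io_bdryElem, ← map_smul]
    simp [bdry]

theorem nontriv_iff (i : ℕ) :
    Nontrivial (ReducedHomology n i) ↔ ¬ Ex ℤ (Finset.univ : Finset (Fin n)) (i + 2) := by
  rw [← not_subsingleton_iff_nontrivial, not_iff_not, ReducedHomology,
    Submodule.Quotient.subsingleton_iff, Submodule.eq_top_iff']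
  constructor
  · intro h c hc hdc
    obtain ⟨x, rfl⟩ := io_surj (k := i + 1) hc
    have hx : bdry n i x = 0 := io_inj i (by rw [io_bdry, hdc, map_zero])
    obtain ⟨y, hy⟩ := h ⟨x, hx⟩
    refine ⟨io n (i + 2) y, io_mem y, ?_⟩
    rw [← io_bdry, hy]; rfl
  · rintro h ⟨x, hx⟩
    obtain ⟨e, he, hde⟩ := h (io n (i + 1) x) (io_mem x) (by
      rw [← io_bdry, LinearMap.mem_ker.1 hx, map_zero])
    obtain ⟨y, rfl⟩ := io_surj (k := i + 2) he
    refine ⟨y, io_inj _ ?_⟩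
    rw [io_bdry, hde]; rfl

end transfer
end ER

theorem edelman_reiner_conjecture (n i : ℕ) (hn : 2 ≤ n) :
    Nontrivial (ReducedHomology n i) ↔ (3 * i + 5 ≤ 2 * n ∧ n ≤ 3 * i + 4) := by
  rw [ER.nontriv_iff]
  constructor
  · intro h
    by_contra hc
    refine h (ER.vanish_int _ _ ?_)
    rw [Finset.card_univ, Fintype.card_fin, ER.Good]
    omega
  · rintro ⟨h1, h2⟩
    exact (ER.nonvanish ℤ (n - 1) (i + 1) (by omega) (by omega) Finset.univ
      (by rw [Finset.card_univ, Fintype.card_fin]; omega)).not_Ex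
end
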